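/- arXiv:1612.08028 — 2 statements merged into one kernel-verified Lean document; each statement's English description precedes it below -/
import Mathlib

section
/- Let Λ ⊆ ℤⁿ be a lattice (finite-index subgroup) of determinant m, let M_Λ denote the sup norm of a shortest non-zero vector of Λ, and for B > 0 let N_Λ(B) = #{x ∈ Λ : ‖x‖_∞ ≤ B}. Then N_Λ(B) ≪_n Bⁿ/m + B^{n−1}/M_Λ^{n−1} + 1. -/
open MvPolynomial Filter Pointwise

noncomputable section

/-- The linear form with coefficient vector `c`. -/
def linForm {R : Type*} [CommRing R] {n : ℕ} (c : Fin n → R) : MvPolynomial (Fin n) R :=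
  ∑ i, C (c i) * X i

/-- `ρ_F(m)`: the number of zeros of `F` in `(ℤ/mℤ)ⁿ`. -/
def rhoF {n : ℕ} (F : MvPolynomial (Fin n) ℤ) (m : ℕ) : ℕ :=
  Nat.card {a : Fin n → ZMod m // MvPolynomial.eval a (F.map (Int.castRingHom (ZMod m))) = 0}

/-- The discriminant `Δ(F) = ∏_{i₁<⋯<iₙ} |det(L_{i₁},…,L_{iₙ})|`, the product being over
all `n`-element subsets of the linear factors (parametrized by strictly monotone maps). -/
def discProd {n d : ℕ} (L : Fin d → Fin n → ℂ) : ℝ :=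
  ∏ᶠ g ∈ {g : Fin n → Fin d | StrictMono g},
    ‖Matrix.det (Matrix.of fun i j => L (g i) j)‖

/-- `F` is a decomposable form with linear factors `L₁,…,L_d` having
algebraic-integer coefficients. -/
def IsDecomp {n d : ℕ} (F : MvPolynomial (Fin n) ℤ) (L : Fin d → Fin n → ℂ) : Prop :=
  (∀ j i, IsIntegral ℤ (L j i)) ∧ F.map (Int.castRingHom ℂ) = ∏ j, linForm (L j)

/-- An integer is `k`-free if it is divisible by no `k`-th power of a prime. -/
def KFree (k : ℕ) (N : ℤ) : Prop := ∀ p : ℕ, p.Prime → ¬ ((p : ℤ) ^ k ∣ N)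

/-- `N_{F,k}(B)`. -/
def NFk {n : ℕ} (F : MvPolynomial (Fin n) ℤ) (k : ℕ) (B : ℝ) : ℕ :=
  Set.ncard {x : Fin n → ℤ | (∀ i, |(x i : ℝ)| ≤ B) ∧ KFree k (MvPolynomial.eval x F)}

def log1 (x : ℝ) : ℝ := max 1 (Real.log x)
def log2 (x : ℝ) : ℝ := log1 (log1 x)
def log3 (x : ℝ) : ℝ := log1 (log2 x)

/-- `ξ₁` is eventually increasing, tends to infinity and is `O(log₂ B / log₃ B)`. -/
def Xi1Good (ξ₁ : ℝ → ℝ) : Prop :=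
  (∃ B₀ : ℝ, ∀ ⦃B B' : ℝ⦄, B₀ ≤ B → B ≤ B' → ξ₁ B ≤ ξ₁ B') ∧
  Tendsto ξ₁ atTop atTop ∧ (ξ₁ =O[atTop] fun B => log2 B / log3 B)

def xi2 (n : ℕ) (B : ℝ) : ℝ := B ^ n * Real.log B ^ ((2 : ℝ) / 3)

def xi3 (C₁ : ℝ) (k : ℕ) (B : ℝ) : ℝ := C₁ * B ^ 2 * Real.log B ^ (-(2 * (k : ℝ)) / 3)

/-- `C(ξ₁) = ∏_{p ≤ ξ₁} p^{k-1}`. -/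
def Cxi (k : ℕ) (ξ : ℝ) : ℕ := ∏ᶠ p ∈ {p : ℕ | p.Prime ∧ (p : ℝ) ≤ ξ}, p ^ (k - 1)

/-- `𝒟(u₂) = ∏ p` over primes `ξ₁ < p ≤ (1/12)log(B²/u₂)`, `p ∤ u₂`, `p ≡ 1 (mod k)`. -/
def scrD (k : ℕ) (ξ₁ B : ℝ) (u₂ : ℕ) : ℕ :=
  ∏ᶠ p ∈ {p : ℕ | p.Prime ∧ ξ₁ < (p : ℝ) ∧ (p : ℝ) ≤ Real.log (B ^ 2 / (u₂ : ℝ)) / 12 ∧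
      ¬ p ∣ u₂ ∧ p % k = 1}, p

/-- The set `𝒮_p ⊆ 𝔽_pⁿ` attached to a factorization `F = F*·∏𝓛ᵢ` over `ℤ_p`. -/
def Sp {n : ℕ} (p : ℕ) (hp : p.Prime) {τ : ℕ}
    (𝓛 : Fin τ → Fin n → @PadicInt p ⟨hp⟩)
    (Fstar : MvPolynomial (Fin n) (@PadicInt p ⟨hp⟩)) (x : Fin n → ZMod p) : Prop :=
  (∃ i j : Fin τ, i < j ∧ (∑ m, (@PadicInt.toZMod p ⟨hp⟩) (𝓛 i m) * x m) = 0 ∧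
      (∑ m, (@PadicInt.toZMod p ⟨hp⟩) (𝓛 j m) * x m) = 0) ∨
  MvPolynomial.eval x (Fstar.map (@PadicInt.toZMod p ⟨hp⟩)) = 0

/-- The data `(𝓛ᵢ, F*)` is a factorization of `F` over `ℤ_p` with `F*` having no
linear factor over `ℚ_p`. -/
def IsPadicFact {n : ℕ} (F : MvPolynomial (Fin n) ℤ) (p : ℕ) (hp : p.Prime) {τ : ℕ}
    (𝓛 : Fin τ → Fin n → @PadicInt p ⟨hp⟩)
    (Fstar : MvPolynomial (Fin n) (@PadicInt p ⟨hp⟩)) : Prop :=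
  F.map (Int.castRingHom (@PadicInt p ⟨hp⟩)) = Fstar * ∏ i, linForm (𝓛 i) ∧
  ∀ c : Fin n → @Padic p ⟨hp⟩, (∃ i, c i ≠ 0) →
    ¬ (linForm c ∣ Fstar.map (@PadicInt.Coe.ringHom p ⟨hp⟩))


-- τ_F(p) intrinsically: number of linear factors of F mod p up to scaling
def tauFp {n : ℕ} (F : MvPolynomial (Fin n) ℤ) (p : ℕ) : ℕ :=
  Nat.card {c : Fin n → ZMod p //
    (∃ i, c i = 1 ∧ ∀ j, j < i → c j = 0) ∧
    linForm c ∣ F.map (Int.castRingHom (ZMod p))}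

def tauF {n : ℕ} (F : MvPolynomial (Fin n) ℤ) (m : ℕ) : ℕ :=
  ∏ p ∈ m.primeFactors, tauFp F p

def sigmaPow (α : ℝ) (m : ℕ) : ℝ := ∑ s ∈ m.divisors, (s : ℝ) ^ α

-- sup norm / lattice minimum / lattice point count
def supNorm {n : ℕ} (x : Fin n → ℤ) : ℕ := Finset.univ.sup fun i => (x i).natAbs

def latMin {n : ℕ} (Λ : AddSubgroup (Fin n → ℤ)) : ℕ :=
  sInf {m : ℕ | ∃ x ∈ Λ, x ≠ 0 ∧ supNorm x = m}

def NLat {n : ℕ} (Λ : AddSubgroup (Fin n → ℤ)) (B : ℝ) : ℕ :=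
  Set.ncard {x : Fin n → ℤ | x ∈ Λ ∧ ∀ i, |(x i : ℝ)| ≤ B}

-- the H_{u₁,u₂}(B) count
def Hcount {n : ℕ} (F : MvPolynomial (Fin n) ℤ)
    {τ : ∀ p : ℕ, p.Prime → ℕ}
    (𝓛 : ∀ (p : ℕ) (hp : p.Prime), Fin (τ p hp) → Fin n → @PadicInt p ⟨hp⟩)
    (Fstar : ∀ (p : ℕ) (hp : p.Prime), MvPolynomial (Fin n) (@PadicInt p ⟨hp⟩))
    (k u₁ u₂ D : ℕ) (B : ℝ) : ℕ :=
  Set.ncard {m : Fin n → ℤ | (∀ i, |(m i : ℝ)| ≤ B) ∧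
    (u₁ : ℤ) ∣ MvPolynomial.eval m F ∧ (u₂ : ℤ) ∣ MvPolynomial.eval m F ∧
    (∃ s : ℕ, s < D ∧ (D : ℤ) ∣ (MvPolynomial.eval m F - (u₁ : ℤ) * u₂ * (s : ℤ) ^ k)) ∧
    ∀ (p : ℕ) (hp : p.Prime), p ∣ u₁ * u₂ →
      ¬ Sp p hp (𝓛 p hp) (Fstar p hp) (fun i => ((m i : ZMod p)))}

-- N₃(B)
def N3count {n : ℕ} (F : MvPolynomial (Fin n) ℤ) (k : ℕ) (ξ₁ ξ₂ B : ℝ) : ℕ :=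
  Set.ncard {x : Fin n → ℤ | (∀ i, |(x i : ℝ)| ≤ B) ∧
    (∃ p : ℕ, p.Prime ∧ ξ₂ < (p : ℝ) ∧ (p : ℤ) ^ k ∣ MvPolynomial.eval x F) ∧
    (∀ p : ℕ, p.Prime → ξ₁ < (p : ℝ) → (p : ℝ) ≤ ξ₂ → ¬ ((p : ℤ) ^ 2 ∣ MvPolynomial.eval x F)) ∧
    (∀ p : ℕ, p.Prime → (p : ℤ) ^ k ∣ MvPolynomial.eval x F → ξ₁ < (p : ℝ))}

-- N₃*(B)
def N3starCount {n : ℕ}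
    {τ : ∀ p : ℕ, p.Prime → ℕ}
    (𝓛 : ∀ (p : ℕ) (hp : p.Prime), Fin (τ p hp) → Fin n → @PadicInt p ⟨hp⟩)
    (Fstar : ∀ (p : ℕ) (hp : p.Prime), MvPolynomial (Fin n) (@PadicInt p ⟨hp⟩))
    (ξ₁ B : ℝ) : ℕ :=
  Set.ncard {x : Fin n → ℤ | (∀ i, |(x i : ℝ)| ≤ B) ∧
    ∃ (p : ℕ) (hp : p.Prime), ξ₁ < (p : ℝ) ∧
      Sp p hp (𝓛 p hp) (Fstar p hp) (fun i => ((x i : ZMod p)))}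

-- N₃†(B)
def N3dag {n : ℕ} (F : MvPolynomial (Fin n) ℤ)
    {τ : ∀ p : ℕ, p.Prime → ℕ}
    (𝓛 : ∀ (p : ℕ) (hp : p.Prime), Fin (τ p hp) → Fin n → @PadicInt p ⟨hp⟩)
    (Fstar : ∀ (p : ℕ) (hp : p.Prime), MvPolynomial (Fin n) (@PadicInt p ⟨hp⟩))
    (k : ℕ) (ξ₁ ξ₂ B : ℝ) : ℕ :=
  Set.ncard {x : Fin n → ℤ | (∀ i, |(x i : ℝ)| ≤ B) ∧
    ∃ (u : ℤ) (q : ℕ), q.Prime ∧ ξ₂ < (q : ℝ) ∧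
      MvPolynomial.eval x F = u * (q : ℤ) ^ k ∧
      (∀ p : ℕ, p.Prime → (p : ℝ) ≤ ξ₁ → ¬ ((p : ℤ) ^ k ∣ u)) ∧
      (∀ p : ℕ, p.Prime → ξ₁ < (p : ℝ) → (p : ℝ) ≤ ξ₂ → ¬ ((p : ℤ) ^ 2 ∣ u)) ∧
      (∀ (p : ℕ) (hp : p.Prime), (p : ℤ) ∣ u →
        ¬ Sp p hp (𝓛 p hp) (Fstar p hp) (fun i => ((x i : ZMod p))))}

-- ℛ_l : congruence classes mod l = u₁u₂D
def Rset {n : ℕ} (F : MvPolynomial (Fin n) ℤ)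
    {τ : ∀ p : ℕ, p.Prime → ℕ}
    (𝓛 : ∀ (p : ℕ) (hp : p.Prime), Fin (τ p hp) → Fin n → @PadicInt p ⟨hp⟩)
    (Fstar : ∀ (p : ℕ) (hp : p.Prime), MvPolynomial (Fin n) (@PadicInt p ⟨hp⟩))
    (k u₁ u₂ D : ℕ) : Set (Fin n → ZMod (u₁ * u₂ * D)) :=
  {m | ∃ a : Fin n → ℤ, (∀ i, ((a i : ZMod (u₁ * u₂ * D))) = m i) ∧
    (u₁ : ℤ) ∣ MvPolynomial.eval a F ∧ (u₂ : ℤ) ∣ MvPolynomial.eval a F ∧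
    (∃ s : ℕ, s < D ∧ (D : ℤ) ∣ (MvPolynomial.eval a F - (u₁ : ℤ) * u₂ * (s : ℤ) ^ k)) ∧
    ∀ (p : ℕ) (hp : p.Prime), p ∣ u₁ * u₂ →
      ¬ Sp p hp (𝓛 p hp) (Fstar p hp) (fun i => ((a i : ZMod p)))}

-- exponential sum E_ℛ(t; l)
def Esum {n l : ℕ} (R : Set (Fin n → ZMod l)) (t : Fin n → ℤ) : ℂ :=
  ∑ᶠ a ∈ R, Complex.exp (-(2 * Real.pi * Complex.I) *
    (∑ i, ((a i).val : ℂ) * (t i : ℂ)) / (l : ℂ))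

def Mplus {n : ℕ} (l : ℕ) (R : Set (Fin n → ZMod l)) (B : ℝ) : ℝ :=
  (3 * B) ^ n * R.ncard / (l : ℝ) ^ n

def Mpp {n : ℕ} (l : ℕ) (R : Set (Fin n → ZMod l)) (B : ℝ) : ℝ :=
  B ^ n / (l : ℝ) ^ n *
    ∑ᶠ t ∈ {t : Fin n → ℤ | t ≠ 0 ∧ ∀ i, |(t i : ℝ)| ≤ (l : ℝ) / B},
      ‖Esum R t‖

-- S(t; p)
def Ssum {n : ℕ} (p : ℕ) (hp : p.Prime) {τ : ℕ}
    (𝓛 : Fin τ → Fin n → @PadicInt p ⟨hp⟩) (t : Fin n → ℤ) : ℂ :=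
  ∑ i : Fin τ,
    ∑ᶠ a ∈ {a : Fin n → ZMod p | (∑ m, (@PadicInt.toZMod p ⟨hp⟩) (𝓛 i m) * a m) = 0},
      Complex.exp ((2 * Real.pi * Complex.I) *
        (∑ m, ((a m).val : ℂ) * (t m : ℂ)) / (p : ℂ))

-- |S(t; l)| for squarefree l
def SabsSF {n : ℕ} {τ : ∀ p : ℕ, p.Prime → ℕ}
    (𝓛 : ∀ (p : ℕ) (hp : p.Prime), Fin (τ p hp) → Fin n → @PadicInt p ⟨hp⟩)
    (l : ℕ) (t : Fin n → ℤ) : ℝ :=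
  ∏ p ∈ l.primeFactors.attach,
    ‖Ssum p.1 (Nat.prime_of_mem_primeFactors p.2)
      (𝓛 p.1 (Nat.prime_of_mem_primeFactors p.2)) t‖

-- admissible u₂'s
def U2set (ξ₁ ξ₂ ξ₃ : ℝ) : Set ℕ :=
  {u | 0 < u ∧ (u : ℝ) ≤ ξ₃ ∧ Squarefree u ∧
    ∀ p ∈ u.primeFactors, ξ₁ < (p : ℝ) ∧ (p : ℝ) ≤ ξ₂}


-- extra defs for theorems

/-- `N₄(B)` from Lemma N4B. -/
def N4sum {n : ℕ} (F : MvPolynomial (Fin n) ℤ)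
    {τ : ∀ p : ℕ, p.Prime → ℕ}
    (𝓛 : ∀ (p : ℕ) (hp : p.Prime), Fin (τ p hp) → Fin n → @PadicInt p ⟨hp⟩)
    (Fstar : ∀ (p : ℕ) (hp : p.Prime), MvPolynomial (Fin n) (@PadicInt p ⟨hp⟩))
    (k : ℕ) (C₁ : ℝ) (ξ₁ : ℝ → ℝ) (B : ℝ) : ℝ :=
  ∑ᶠ u₁ ∈ {u₁ : ℕ | u₁ ∣ Cxi k (ξ₁ B)},
    ∑ᶠ u₂ ∈ U2set (ξ₁ B) (xi2 n B) (xi3 C₁ k B),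
      Mplus (u₁ * u₂ * scrD k (ξ₁ B) B u₂)
        (Rset F 𝓛 Fstar k u₁ u₂ (scrD k (ξ₁ B) B u₂)) B /
        (k : ℝ) ^ (scrD k (ξ₁ B) B u₂).primeFactors.card

/-- the inner truncated sum `Σ'_{|tᵢ|≤Y} |S(t;u₂)|`. -/
def Ssumbox {n : ℕ} {τ : ∀ p : ℕ, p.Prime → ℕ}
    (𝓛 : ∀ (p : ℕ) (hp : p.Prime), Fin (τ p hp) → Fin n → @PadicInt p ⟨hp⟩)
    (u₂ : ℕ) (Y : ℝ) : ℝ :=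
  ∑ᶠ t ∈ {t : Fin n → ℤ | t ≠ 0 ∧ ∀ i, |(t i : ℝ)| ≤ Y}, SabsSF 𝓛 u₂ t

/-- `Q` restricted to a set of `u₂`'s. -/
def QUgen {n : ℕ} {τ : ∀ p : ℕ, p.Prime → ℕ}
    (𝓛 : ∀ (p : ℕ) (hp : p.Prime), Fin (τ p hp) → Fin n → @PadicInt p ⟨hp⟩)
    (S : Set ℕ) (B : ℝ) : ℝ :=
  ∑ᶠ u₂ ∈ S, (1 / (u₂ : ℝ) ^ n) *
    Ssumbox 𝓛 u₂ ((u₂ : ℝ) ^ ((9 : ℝ) / 10) / B ^ ((4 : ℝ) / 5))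

/-- `l* = ∏_{p ≤ Ξ, p | u₂} p`. -/
def lstar (u₂ : ℕ) (Ξ : ℝ) : ℕ :=
  ∏ᶠ p ∈ {p : ℕ | p.Prime ∧ p ∣ u₂ ∧ (p : ℝ) ≤ Ξ}, p

/-!
Let `P = {x ∈ Λ : ‖x‖_∞ ≤ B}`, and assume `M_Λ ≤ B`, as otherwise `P = {0}`.

If `P` spans `ℝⁿ`, reducing modulo a basis contained in `P` shows that every coset of `Λ` in `ℤⁿ`
has a representative of norm at most `nB`. The `m` translates of `P` by such representatives are
disjoint and lie in the box of radius `(n + 1)B`, whence `m |P| ≪ Bⁿ`.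

Otherwise `P` lies in a hyperplane. Its points are at distance at least `M_Λ` from each other, so
the balls of radius `M_Λ / 2` about them are disjoint, and comparing volumes *in the hyperplane*
gives `|P| ≤ (2B / M_Λ + 1)ⁿ⁻¹`.
-/

open MeasureTheory Metric Module

section Separated

variable {E : Type*} [NormedAddCommGroup E] [NormedSpace ℝ E] {R δ : ℝ}

theorem card_le_pow_finrank_of_pairwise_le_dist [FiniteDimensional ℝ E] {s : Finset E}
    (hδ : 0 < δ) (hR : 0 ≤ R) (hs : ∀ x ∈ s, ‖x‖ ≤ R)
    (hsep : (s : Set E).Pairwise fun x y => δ ≤ dist x y) :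
    (s.card : ℝ) ≤ (2 * R / δ + 1) ^ finrank ℝ E := by
  borelize E
  let μ : Measure E := Measure.addHaar
  have hball (x : E) {r : ℝ} (hr : 0 < r) :
      μ.real (ball x r) = r ^ finrank ℝ E * μ.real (ball 0 1) := by
    rw [measureReal_def, measureReal_def, Measure.addHaar_ball_of_pos μ x hr, ENNReal.toReal_mul,
      ENNReal.toReal_ofReal (by positivity)]
  have hunit : 0 < μ.real (ball 0 1) :=
    ENNReal.toReal_pos (measure_ball_pos μ 0 one_pos).ne' measure_ball_lt_top.ne
  have hdisj : (s : Set E).PairwiseDisjoint fun c => ball c (δ / 2) :=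
    fun x hx y hy hxy => ball_disjoint_ball (by simpa using hsep hx hy hxy)
  have hsub : (⋃ c ∈ s, ball c (δ / 2)) ⊆ ball 0 (R + δ / 2) :=
    Set.iUnion₂_subset fun c hc => ball_subset_ball' <| by
      rw [dist_zero_right]; linarith [hs c hc]
  have hvol : s.card * (δ / 2) ^ finrank ℝ E * μ.real (ball 0 1) ≤
      (R + δ / 2) ^ finrank ℝ E * μ.real (ball 0 1) := by
    calc _ = μ.real (⋃ c ∈ s, ball c (δ / 2)) := by
          rw [measureReal_biUnion_finset (μ := μ) hdisj (fun _ _ => measurableSet_ball)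
            fun _ _ => measure_ball_lt_top.ne]
          simp only [hball _ (half_pos hδ), Finset.sum_const, nsmul_eq_mul, mul_assoc]
      _ ≤ μ.real (ball 0 (R + δ / 2)) := measureReal_mono hsub measure_ball_lt_top.ne
      _ = _ := hball 0 (by positivity)
  have hratio : 2 * R / δ + 1 = (R + δ / 2) / (δ / 2) := by field_simp
  rw [hratio, div_pow, le_div_iff₀ (by positivity)]
  exact le_of_mul_le_mul_right hvol hunit

theorem card_le_pow_finrank_span_of_pairwise_le_dist {s : Finset E} (hδ : 0 < δ) (hR : 0 ≤ R)
    (hs : ∀ x ∈ s, ‖x‖ ≤ R) (hsep : (s : Set E).Pairwise fun x y => δ ≤ dist x y) :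
    (s.card : ℝ) ≤ (2 * R / δ + 1) ^ finrank ℝ (Submodule.span ℝ (s : Set E)) := by
  classical
  set V := Submodule.span ℝ (s : Set E)
  have hcard : (s.subtype (· ∈ V)).card = s.card := by
    rw [Finset.card_subtype,
      Finset.filter_true_of_mem (p := (· ∈ V)) fun _ hx => Submodule.subset_span hx]
  rw [← hcard]
  refine card_le_pow_finrank_of_pairwise_le_dist hδ hR
    (fun x hx => hs x (Finset.mem_subtype.1 hx)) fun x hx y hy hxy => ?_
  exact hsep (Finset.mem_subtype.1 hx) (Finset.mem_subtype.1 hy) (Subtype.coe_injective.ne hxy)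

theorem finite_inter_of_pairwise_le_dist {X : Type*} [MetricSpace X] [ProperSpace X] {s t : Set X}
    (hδ : 0 < δ) (hs : s.Pairwise fun x y => δ ≤ dist x y) (ht : Bornology.IsBounded t) :
    (t ∩ s).Finite := by
  have hdiscrete : DiscreteTopology s :=
    .of_forall_le_dist hδ fun x y hxy => hs x.2 y.2 (Subtype.coe_injective.ne hxy)
  exact finite_isBounded_inter_isClosed ⟨hdiscrete⟩ ht (isClosed_of_pairwise_le_dist hδ hs)

theorem ncard_closedBall_inter_le_pow_finrank_span [FiniteDimensional ℝ E] {s : Set E} (hδ : 0 < δ)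
    (hR : 0 ≤ R) (hs : s.Pairwise fun x y => δ ≤ dist x y) :
    ((closedBall 0 R ∩ s).ncard : ℝ) ≤
      (2 * R / δ + 1) ^ finrank ℝ (Submodule.span ℝ (closedBall 0 R ∩ s)) := by
  have : ProperSpace E := FiniteDimensional.proper_real E
  have hfin := finite_inter_of_pairwise_le_dist hδ hs (isBounded_closedBall (x := 0) (r := R))
  obtain ⟨t, ht⟩ := hfin.exists_finset_coe
  have hts : (t : Set E) ⊆ closedBall 0 R ∩ s := ht.le
  rw [← ht, Set.ncard_coe_finset]
  exact card_le_pow_finrank_span_of_pairwise_le_dist hδ hR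
    (fun x hx => mem_closedBall_zero_iff.1 (hts hx).1) (hs.mono fun x hx => (hts hx).2)

end Separated

theorem ncard_closedBall_inter_le_one {X : Type*} [PseudoMetricSpace X] {x : X} {s : Set X}
    {B M : ℝ} (hx : x ∈ s) (hs : s.Pairwise fun y z => M ≤ dist y z) (hBM : B < M) :
    (closedBall x B ∩ s).ncard ≤ 1 := by
  have hsub : closedBall x B ∩ s ⊆ {x} := fun y hy => by
    by_contra hne
    exact (hBM.trans_le (hs hy.2 hx hne)).not_ge hy.1
  simpa using Set.ncard_le_ncard hsub

theorem pairwise_le_dist_of_le_norm {E : Type*} [SeminormedAddCommGroup E] {Λ : AddSubgroup E}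
    {δ : ℝ} (hΛ : ∀ x ∈ Λ, x ≠ 0 → δ ≤ ‖x‖) : (Λ : Set E).Pairwise fun x y => δ ≤ dist x y :=
  fun x hx y hy hxy => by
    simpa only [dist_eq_norm] using hΛ _ (Λ.sub_mem hx hy) (sub_ne_zero.2 hxy)

theorem relIndex_mul_ncard_le_ncard_add {G : Type*} [AddGroup G] {H K : AddSubgroup G}
    {S T : Set G} (hS : S ⊆ H) (hT : ∀ x ∈ K, ∃ t ∈ T, -x + t ∈ H) (hTS : (T + S).Finite) :
    H.relIndex K * S.ncard ≤ (T + S).ncard := by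
  have hrep (q : K ⧸ H.addSubgroupOf K) : ∃ t ∈ T, -(q.out : G) + t ∈ H := hT _ q.out.2
  choose r hrT hrH using hrep
  have hinj : Set.InjOn (fun p : (K ⧸ H.addSubgroupOf K) × G => r p.1 + p.2) (Set.univ ×ˢ S) := by
    rintro ⟨q, x⟩ ⟨-, hx⟩ ⟨q', x'⟩ ⟨-, hx'⟩ (heq : r q + x = r q' + x')
    have hqq' : q = q' := by
      rw [← QuotientAddGroup.out_eq' q, ← QuotientAddGroup.out_eq' q', QuotientAddGroup.eq,
        AddSubgroup.mem_addSubgroupOf]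
      have hmem : (-(q.out : G) + r q + x) + -(-(q'.out : G) + r q' + x') ∈ H :=
        H.add_mem (H.add_mem (hrH q) (hS hx)) (H.neg_mem (H.add_mem (hrH q') (hS hx')))
      simpa [add_assoc, heq] using hmem
    subst hqq'
    simpa using heq
  rw [AddSubgroup.relIndex, AddSubgroup.index, ← Set.ncard_univ, ← Set.ncard_prod,
    ← hinj.ncard_image]
  refine Set.ncard_le_ncard ?_ hTS
  rintro _ ⟨⟨q, x⟩, ⟨-, hx⟩, rfl⟩
  exact Set.add_mem_add (hrT q) hx

section Lattice

variable {E : Type*} [NormedAddCommGroup E] [NormedSpace ℝ E] [FiniteDimensional ℝ E]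
  {Λ L : AddSubgroup E} {B M δ : ℝ}

theorem exists_norm_le_neg_add_mem_of_span_eq_top
    (hspan : Submodule.span ℝ (closedBall 0 B ∩ (Λ : Set E)) = ⊤) (x : E) :
    ∃ r : E, ‖r‖ ≤ finrank ℝ E * B ∧ -x + r ∈ Λ := by
  let b := Basis.ofSpan hspan.ge
  have hb (i) : b i ∈ closedBall 0 B ∩ (Λ : Set E) :=
    Basis.ofSpan_subset hspan.ge (Set.mem_range_self i)
  have : Fintype _ := FiniteDimensional.fintypeBasisIndex b
  refine ⟨ZSpan.fract b x, ?_, ?_⟩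
  · calc ‖ZSpan.fract b x‖ ≤ ∑ i, ‖b i‖ := ZSpan.norm_fract_le b x
      _ ≤ Fintype.card _ • B :=
        Finset.sum_le_card_nsmul _ _ _ fun i _ => mem_closedBall_zero_iff.1 (hb i).1
      _ = finrank ℝ E * B := by rw [finrank_eq_card_basis b, nsmul_eq_mul]
  · have hfloor : (ZSpan.floor b x : E) ∈ Λ := by
      have hle : Submodule.span ℤ (Set.range b) ≤ AddSubgroup.toIntSubmodule Λ :=
        Submodule.span_le.2 (Set.range_subset_iff.2 fun i => (hb i).2)
      exact hle (ZSpan.floor b x).2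
    rw [ZSpan.fract_apply, neg_add_eq_sub, sub_sub_cancel_left]
    exact Λ.neg_mem hfloor

theorem relIndex_mul_ncard_le_of_span_eq_top (hΛL : Λ ≤ L) (hδ : 0 < δ) (hB : 0 ≤ B)
    (hL : (L : Set E).Pairwise fun x y => δ ≤ dist x y)
    (hspan : Submodule.span ℝ (closedBall 0 B ∩ (Λ : Set E)) = ⊤) :
    (Λ.relIndex L * (closedBall 0 B ∩ (Λ : Set E)).ncard : ℝ) ≤
      (2 * ((finrank ℝ E + 1) * B) / δ + 1) ^ finrank ℝ E := by
  have : ProperSpace E := FiniteDimensional.proper_real E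
  set R := (finrank ℝ E + 1) * B
  have hR : 0 ≤ R := by positivity
  have hcover (x) (hx : x ∈ L) :
      ∃ r ∈ closedBall 0 (finrank ℝ E * B) ∩ (L : Set E), -x + r ∈ Λ := by
    obtain ⟨r, hr, hrx⟩ := exists_norm_le_neg_add_mem_of_span_eq_top hspan x
    have hrL : r ∈ L := by simpa using L.add_mem hx (hΛL hrx)
    exact ⟨r, ⟨mem_closedBall_zero_iff.2 hr, hrL⟩, hrx⟩
  have hsub : closedBall 0 (finrank ℝ E * B) ∩ (L : Set E) + closedBall 0 B ∩ (Λ : Set E) ⊆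
      closedBall 0 R ∩ (L : Set E) := by
    rintro _ ⟨r, ⟨hr, hrL⟩, x, ⟨hx, hxΛ⟩, rfl⟩
    rw [mem_closedBall_zero_iff] at hr hx
    refine ⟨mem_closedBall_zero_iff.2 ?_, L.add_mem hrL (hΛL hxΛ)⟩
    calc ‖r + x‖ ≤ ‖r‖ + ‖x‖ := norm_add_le r x
      _ ≤ finrank ℝ E * B + B := add_le_add hr hx
      _ = (finrank ℝ E + 1) * B := by ring
  have hfin := finite_inter_of_pairwise_le_dist hδ hL (isBounded_closedBall (x := 0) (r := R))
  calc (Λ.relIndex L * (closedBall 0 B ∩ (Λ : Set E)).ncard : ℝ)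
      ≤ (closedBall 0 R ∩ (L : Set E)).ncard := mod_cast
        (relIndex_mul_ncard_le_ncard_add Set.inter_subset_right hcover (hfin.subset hsub)).trans
          (Set.ncard_le_ncard hsub hfin)
    _ ≤ (2 * R / δ + 1) ^ finrank ℝ (Submodule.span ℝ (closedBall 0 R ∩ (L : Set E))) :=
      ncard_closedBall_inter_le_pow_finrank_span hδ hR hL
    _ ≤ (2 * R / δ + 1) ^ finrank ℝ E := by
      gcongr
      · exact le_add_of_nonneg_left (by positivity)
      · exact Submodule.finrank_le _

theorem ncard_closedBall_inter_le_of_span_ne_top {s : Set E} (hM : 0 < M) (hB : 0 ≤ B)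
    (hs : s.Pairwise fun x y => M ≤ dist x y)
    (hspan : Submodule.span ℝ (closedBall 0 B ∩ s) ≠ ⊤) :
    ((closedBall 0 B ∩ s).ncard : ℝ) ≤ (2 * B / M + 1) ^ (finrank ℝ E - 1) := by
  refine (ncard_closedBall_inter_le_pow_finrank_span hM hB hs).trans ?_
  gcongr
  · exact le_add_of_nonneg_left (by positivity)
  · exact Nat.le_sub_one_of_lt (Submodule.finrank_lt hspan)

theorem ncard_closedBall_inter_le (hΛL : Λ ≤ L) (hΛ : Λ.relIndex L ≠ 0) (hδ : 0 < δ) (hδM : δ ≤ M)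
    (hL : (L : Set E).Pairwise fun x y => δ ≤ dist x y)
    (hM : (Λ : Set E).Pairwise fun x y => M ≤ dist x y) (hB : 0 ≤ B) :
    ((closedBall 0 B ∩ (Λ : Set E)).ncard : ℝ) ≤ (2 * finrank ℝ E + 3) ^ finrank ℝ E *
      ((B / δ) ^ finrank ℝ E / Λ.relIndex L + (B / M) ^ (finrank ℝ E - 1) + 1) := by
  set d := finrank ℝ E
  set C : ℝ := (2 * d + 3) ^ d
  have hM0 : 0 < M := hδ.trans_le hδM
  have hbase : (3 : ℝ) ≤ 2 * d + 3 := by linarith [d.cast_nonneg (α := ℝ)]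
  have hC : 1 ≤ C := one_le_pow₀ (by linarith)
  have hvol : 0 ≤ (B / δ) ^ d / Λ.relIndex L := by positivity
  have hbdry : 0 ≤ (B / M) ^ (d - 1) := by positivity
  obtain hBM | hMB := lt_or_ge B M
  · have hone : ((closedBall 0 B ∩ (Λ : Set E)).ncard : ℝ) ≤ 1 :=
      mod_cast ncard_closedBall_inter_le_one Λ.zero_mem hM hBM
    exact hone.trans (one_le_mul_of_one_le_of_one_le hC (by linarith))
  have hBM1 : 1 ≤ B / M := (one_le_div₀ hM0).2 hMB
  have hBδ1 : 1 ≤ B / δ := (one_le_div₀ hδ).2 (hδM.trans hMB)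
  by_cases hspan : Submodule.span ℝ (closedBall 0 B ∩ (Λ : Set E)) = ⊤
  · have hcount : Λ.relIndex L * ((closedBall 0 B ∩ (Λ : Set E)).ncard : ℝ) ≤ C * (B / δ) ^ d := by
      refine (relIndex_mul_ncard_le_of_span_eq_top hΛL hδ hB hL hspan).trans ?_
      rw [← mul_pow]
      gcongr
      linarith [show 2 * ((d + 1) * B) / δ = (2 * d + 2) * (B / δ) by ring]
    have hle : ((closedBall 0 B ∩ (Λ : Set E)).ncard : ℝ) ≤ C * ((B / δ) ^ d / Λ.relIndex L) := by
      rw [← mul_div_assoc, le_div_iff₀' (by positivity)]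
      exact hcount
    exact hle.trans (by gcongr; linarith)
  · have hle : ((closedBall 0 B ∩ (Λ : Set E)).ncard : ℝ) ≤ C * (B / M) ^ (d - 1) := calc
      _ ≤ (2 * B / M + 1) ^ (d - 1) := ncard_closedBall_inter_le_of_span_ne_top hM0 hB hM hspan
      _ ≤ (3 * (B / M)) ^ (d - 1) := by
        gcongr
        linarith [show 2 * B / M = 2 * (B / M) by ring]
      _ = 3 ^ (d - 1) * (B / M) ^ (d - 1) := mul_pow _ _ _
      _ ≤ C * (B / M) ^ (d - 1) := by
        gcongr
        exact (pow_le_pow_left₀ (by norm_num) hbase _).trans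
          (pow_le_pow_right₀ (by linarith) (Nat.sub_le d 1))
    exact hle.trans (by gcongr; linarith)

end Lattice

section IntegerLattice

variable {n : ℕ}

/-- The inclusion of `ℤⁿ` in `ℝⁿ`, the latter with the sup norm. -/
def intVecCast (n : ℕ) : (Fin n → ℤ) →+ (Fin n → ℝ) :=
  (Int.castAddHom ℝ).compLeft (Fin n)

theorem intVecCast_injective : Function.Injective (intVecCast n) :=
  Int.cast_injective.comp_left

theorem norm_intVecCast (x : Fin n → ℤ) : ‖intVecCast n x‖ = supNorm x := by
  have hcoord (i : Fin n) : ‖intVecCast n x i‖₊ = ((x i).natAbs : NNReal) :=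
    (NNReal.natCast_natAbs (x i)).symm
  rw [Pi.norm_def, supNorm, ← NNReal.coe_natCast,
    Finset.apply_sup_eq_sup_comp_of_linearOrder (Nat.cast : ℕ → NNReal) Nat.mono_cast Nat.cast_zero]
  simp only [hcoord, Function.comp_def]

theorem supNorm_pos {x : Fin n → ℤ} (hx : x ≠ 0) : 0 < supNorm x := by
  have h : 0 < ‖intVecCast n x‖ := norm_pos_iff.2 ((map_ne_zero_iff _ intVecCast_injective).2 hx)
  exact_mod_cast norm_intVecCast x ▸ h

theorem latMin_le_supNorm {Λ : AddSubgroup (Fin n → ℤ)} {x : Fin n → ℤ} (hx : x ∈ Λ) (hx0 : x ≠ 0) :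
    latMin Λ ≤ supNorm x :=
  Nat.sInf_le ⟨x, hx, hx0, rfl⟩

theorem latMin_pos {Λ : AddSubgroup (Fin n → ℤ)} (hΛ : Λ ≠ ⊥) : 0 < latMin Λ := by
  obtain ⟨⟨y, hy⟩, hy0⟩ := Λ.ne_bot_iff_exists_ne_zero.1 hΛ
  rw [ne_eq, AddSubgroup.mk_eq_zero] at hy0
  obtain ⟨x, -, hx0, hx⟩ := Nat.sInf_mem (⟨_, y, hy, hy0, rfl⟩ :
    {m : ℕ | ∃ x ∈ Λ, x ≠ 0 ∧ supNorm x = m}.Nonempty)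
  exact (supNorm_pos hx0).trans_eq hx

theorem ncard_closedBall_inter_map_intVecCast (Λ : AddSubgroup (Fin n → ℤ)) {B : ℝ} (hB : 0 ≤ B) :
    (closedBall 0 B ∩ (Λ.map (intVecCast n) : Set (Fin n → ℝ))).ncard = NLat Λ B := by
  rw [NLat, ← Set.ncard_image_of_injective _ intVecCast_injective, AddSubgroup.coe_map,
    Set.inter_comm, ← Set.image_inter_preimage]
  congr! 2
  ext x
  simp [pi_norm_le_iff_of_nonneg hB, intVecCast]

theorem pairwise_le_dist_range_intVecCast :
    ((intVecCast n).range : Set (Fin n → ℝ)).Pairwise fun x y => 1 ≤ dist x y := by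
  refine pairwise_le_dist_of_le_norm ?_
  rintro _ ⟨x, rfl⟩ hx
  rw [norm_intVecCast]
  exact_mod_cast supNorm_pos (ne_zero_of_map hx)

theorem pairwise_latMin_le_dist (Λ : AddSubgroup (Fin n → ℤ)) :
    (Λ.map (intVecCast n) : Set (Fin n → ℝ)).Pairwise fun x y => (latMin Λ : ℝ) ≤ dist x y := by
  refine pairwise_le_dist_of_le_norm ?_
  rintro _ ⟨x, hx, rfl⟩ hx0
  rw [norm_intVecCast]
  exact_mod_cast latMin_le_supNorm hx (ne_zero_of_map hx0)

theorem relIndex_map_intVecCast (Λ : AddSubgroup (Fin n → ℤ)) :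
    (Λ.map (intVecCast n)).relIndex (intVecCast n).range = Λ.index := by
  rw [AddMonoidHom.range_eq_map, AddSubgroup.relIndex_map_map_of_injective _ _ intVecCast_injective,
    AddSubgroup.relIndex_top_right]

end IntegerLattice

theorem stmt6 (n : ℕ) (hn : 1 ≤ n) :
    ∃ C : ℝ, 0 < C ∧
      ∀ (Λ : AddSubgroup (Fin n → ℤ)) (m : ℕ), Λ.index = m → m ≠ 0 →
        ∀ B : ℝ, 0 < B →
          (NLat Λ B : ℝ) ≤
            C * (B ^ n / (m : ℝ) + B ^ (n - 1) / (latMin Λ : ℝ) ^ (n - 1) + 1) := by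
  refine ⟨(2 * n + 3) ^ n, by positivity, ?_⟩
  rintro Λ m rfl hm B hB
  have : Nonempty (Fin n) := ⟨⟨0, hn⟩⟩
  have hΛ : Λ ≠ ⊥ := by
    rintro rfl
    exact hm (AddSubgroup.index_bot.trans Nat.card_eq_zero_of_infinite)
  have hcount := ncard_closedBall_inter_le (AddSubgroup.map_le_range (intVecCast n) Λ)
    ((relIndex_map_intVecCast Λ).trans_ne hm) one_pos (Nat.one_le_cast.2 (latMin_pos hΛ))
    pairwise_le_dist_range_intVecCast (pairwise_latMin_le_dist Λ) hB.le
  simpa only [ncard_closedBall_inter_map_intVecCast Λ hB.le, relIndex_map_intVecCast,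
    finrank_fin_fun, div_one, div_pow] using hcount

end
end

section
/- Let F ∈ ℤ[x₁,…,xₙ] be an incomplete norm form of degree d > n ≥ 2 with non-zero discriminant, and let ξ₁ = ξ₁(B) be an eventually increasing function tending to infinity with ξ₁(B) = O(log₂B/log₃B). Let N₃*(B) be the number of x ∈ ℤⁿ ∩ [−B,B]ⁿ for which x (mod p) ∈ 𝒮_p for some prime p > ξ₁. Then N₃*(B) = O(Bⁿ/(ξ₁ log ξ₁) + B^{n−1}). -/
open MvPolynomial Filter Pointwise

noncomputable section

/-!
By Hensel's lemma a nonsingular zero of `F*` modulo `p` lifts to a `p`-adic zero of `F`, at which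
the tangent hyperplane would give a linear factor of `F*` over `ℚ_p`; hence every point of `𝒮_p` is
a singular zero of `F` modulo `p`. After a change of variables `F` is a polynomial `f(y, t)` in one
distinguished variable `t` with constant leading coefficient, and `p` divides both `f(y, t)` and its
discriminant at `y`. These conditions cut out a subscheme of codimension two, whose points modulo
some prime `p > ξ₁` are counted by the geometric sieve of Ekedahl and Bhargava.
-/

section LinearForms

variable {R S k E : Type*} [CommRing R] [CommRing S] [Field k] [Field E] {n d : ℕ}

lemma eval_linForm (c y : Fin n → R) : eval y (linForm c) = ∑ m, c m * y m := by
  simp [linForm]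

lemma map_linForm (f : R →+* S) (c : Fin n → R) :
    (linForm c).map f = linForm fun m => f (c m) := by
  simp [linForm]

lemma pderiv_linForm (c : Fin n → R) (i : Fin n) : pderiv i (linForm c) = C (c i) := by
  classical
  simp [linForm, pderiv_X, Pi.single_apply]

lemma linForm_ne_zero {c : Fin n → R} (hc : c ≠ 0) : linForm c ≠ 0 := by
  obtain ⟨i, hi⟩ := Function.ne_iff.1 hc
  intro h
  have := pderiv_linForm c i
  rw [h, map_zero] at this
  exact hi (C_eq_zero.1 this.symm)

/-- The substitution that solves `linForm c = 0` for the variable `X i`; it is meant for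
`c i ≠ 0`, when it realizes the quotient by `linForm c` inside the polynomial ring. -/
def elimVar (c : Fin n → k) (i : Fin n) : MvPolynomial (Fin n) k →ₐ[k] MvPolynomial (Fin n) k :=
  aeval (Function.update X i (X i - C (c i)⁻¹ * linForm c))

lemma elimVar_linForm {c : Fin n → k} {i : Fin n} (hi : c i ≠ 0) :
    elimVar c i (linForm c) = 0 := by
  have hX : ∀ m, elimVar c i (X m) = X m - if m = i then C (c i)⁻¹ * linForm c else 0 := by
    intro m
    rcases eq_or_ne m i with rfl | hm
    · simp [elimVar]
    · simp [elimVar, hm]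
  calc elimVar c i (linForm c)
      = ∑ m, C (c m) * elimVar c i (X m) := by simp [linForm, ← algebraMap_eq]
    _ = linForm c - C (c i) * (C (c i)⁻¹ * linForm c) := by
        simp [hX, mul_sub, linForm]
    _ = 0 := by rw [← mul_assoc, ← C_mul, mul_inv_cancel₀ hi, C_1, one_mul, sub_self]

lemma linForm_dvd_sub_elimVar (c : Fin n → k) (i : Fin n) (P : MvPolynomial (Fin n) k) :
    linForm c ∣ P - elimVar c i P := by
  rw [← Ideal.mem_span_singleton, ← Ideal.Quotient.mk_eq_mk_iff_sub_mem]
  suffices Ideal.Quotient.mkₐ k (Ideal.span {linForm c}) =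
      (Ideal.Quotient.mkₐ k (Ideal.span {linForm c})).comp (elimVar c i) from
    AlgHom.congr_fun this P
  refine MvPolynomial.algHom_ext fun m => ?_
  rcases eq_or_ne m i with rfl | hm
  · simp [elimVar, Ideal.Quotient.eq_zero_iff_mem.2 (Ideal.mem_span_singleton_self (linForm c))]
  · simp [elimVar, hm]

lemma linForm_dvd_iff {c : Fin n → k} {i : Fin n} (hi : c i ≠ 0) {P : MvPolynomial (Fin n) k} :
    linForm c ∣ P ↔ elimVar c i P = 0 := by
  constructor
  · rintro ⟨Q, rfl⟩
    rw [map_mul, elimVar_linForm hi, zero_mul]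
  · intro h
    simpa [h] using linForm_dvd_sub_elimVar c i P

lemma prime_linForm {c : Fin n → k} (hc : c ≠ 0) : Prime (linForm c) := by
  obtain ⟨i, hi⟩ := Function.ne_iff.1 hc
  refine ⟨linForm_ne_zero hc, fun h => ?_, fun P Q h => ?_⟩
  · simpa using (linForm_dvd_iff hi).1 (isUnit_iff_dvd_one.1 h)
  · simpa only [linForm_dvd_iff hi, map_mul, mul_eq_zero] using h

lemma map_elimVar (f : k →+* E) (c : Fin n → k) (i : Fin n) (P : MvPolynomial (Fin n) k) :
    (elimVar c i P).map f = elimVar (fun m => f (c m)) i (P.map f) := by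
  induction P using MvPolynomial.induction_on with
  | C a => simp [← algebraMap_eq]
  | add P Q hP hQ => simp only [map_add, hP, hQ]
  | mul_X P m hP =>
    rw [map_mul, map_mul, hP, map_mul, map_mul]
    rcases eq_or_ne m i with rfl | hm
    · simp [elimVar, map_linForm]
    · simp [elimVar, hm]

lemma linForm_dvd_of_map_dvd_map (f : k →+* E) {c : Fin n → k} (hc : c ≠ 0)
    {P : MvPolynomial (Fin n) k} (h : (linForm c).map f ∣ P.map f) : linForm c ∣ P := by
  obtain ⟨i, hi⟩ := Function.ne_iff.1 hc
  have hfi : f (c i) ≠ 0 := (map_ne_zero f).2 hi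
  rw [map_linForm, linForm_dvd_iff (c := fun m => f (c m)) hfi, ← map_elimVar] at h
  exact (linForm_dvd_iff hi).2 (map_injective f f.injective (h.trans (map_zero _).symm))

end LinearForms

section SingularZeros

variable {σ R S k E : Type*} [CommRing R] [CommRing S] [Field k] [Field E] {n d : ℕ}

/-- `x` is a singular point of the hypersurface `F = 0`: the polynomial and all its partial
derivatives vanish there. -/
def IsSingularZero (F : MvPolynomial σ R) (x : σ → R) : Prop :=
  eval x F = 0 ∧ ∀ i, eval x (pderiv i F) = 0

lemma isSingularZero_mul {P Q : MvPolynomial σ R} {x : σ → R} (hP : eval x P = 0)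
    (hQ : eval x Q = 0) : IsSingularZero (P * Q) x :=
  ⟨by simp [hP], fun i => by simp [Derivation.leibniz, hP, hQ]⟩

lemma IsSingularZero.mul_right {P : MvPolynomial σ R} {x : σ → R} (hP : IsSingularZero P x)
    (Q : MvPolynomial σ R) : IsSingularZero (P * Q) x :=
  ⟨by simp [hP.1], fun i => by simp [Derivation.leibniz, hP.1, hP.2 i]⟩

lemma IsSingularZero.map {P : MvPolynomial σ R} {x : σ → R} (hP : IsSingularZero P x)
    (f : R →+* S) : IsSingularZero (P.map f) (f ∘ x) :=
  ⟨by rw [← map_eval, hP.1, map_zero],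
    fun i => by rw [pderiv_map, ← map_eval, hP.2 i, map_zero]⟩

lemma isSingularZero_map_iff {P : MvPolynomial σ R} {x : σ → R} {f : R →+* S}
    (hf : Function.Injective f) : IsSingularZero (P.map f) (f ∘ x) ↔ IsSingularZero P x := by
  simp only [IsSingularZero, pderiv_map, ← map_eval, map_eq_zero_iff f hf]

/-- The linear form of the tangent hyperplane to `F = 0` at `x`. -/
def tangentForm (F : MvPolynomial (Fin n) R) (x : Fin n → R) : MvPolynomial (Fin n) R :=
  linForm fun m => eval x (pderiv m F)

lemma map_tangentForm (f : R →+* S) (F : MvPolynomial (Fin n) R) (x : Fin n → R) :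
    (tangentForm F x).map f = tangentForm (F.map f) (f ∘ x) := by
  simp only [tangentForm, map_linForm, pderiv_map, map_eval]

lemma tangentForm_linForm_mul {c x : Fin n → R} (hc : eval x (linForm c) = 0)
    (P : MvPolynomial (Fin n) R) :
    tangentForm (linForm c * P) x = C (eval x P) * linForm c := by
  simp only [tangentForm, Derivation.leibniz, pderiv_linForm, smul_eq_mul, map_add, map_mul, hc,
    zero_mul, eval_C, zero_add]
  simp only [linForm, Finset.mul_sum, C_mul, mul_assoc]

lemma tangentForm_dvd_prod_linForm {L : Fin d → Fin n → k} {y : Fin n → k}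
    (h0 : eval y (∏ j, linForm (L j)) = 0) (hy : ¬ IsSingularZero (∏ j, linForm (L j)) y) :
    eval y (tangentForm (∏ j, linForm (L j)) y) = 0 ∧
      tangentForm (∏ j, linForm (L j)) y ∣ ∏ j, linForm (L j) := by
  obtain ⟨j, -, hj⟩ := Finset.prod_eq_zero_iff.1 ((map_prod _ _ _).symm.trans h0)
  rw [← Finset.mul_prod_erase _ _ (Finset.mem_univ j)] at hy ⊢
  set P := ∏ l ∈ Finset.univ.erase j, linForm (L l)
  have hP : eval y P ≠ 0 := fun h => hy (isSingularZero_mul hj h)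
  rw [tangentForm_linForm_mul hj]
  exact ⟨by rw [map_mul, hj, mul_zero],
    mul_comm (linForm (L j)) P ▸ mul_dvd_mul (((Ne.isUnit hP).map C).dvd) dvd_rfl⟩

/-- At a nonsingular point the tangent hyperplane of a totally decomposable hypersurface is one
of its components; it is defined over the field of definition of the point. -/
lemma exists_linForm_dvd_of_not_isSingularZero (f : k →+* E) {Q G : MvPolynomial (Fin n) k}
    {L : Fin d → Fin n → E} (hL : (Q * G).map f = ∏ j, linForm (L j)) {y : Fin n → k}
    (hQ : eval y Q = 0) (hy : ¬ IsSingularZero (Q * G) y) :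
    ∃ c : Fin n → k, c ≠ 0 ∧ linForm c ∣ Q := by
  have h0 : eval y (Q * G) = 0 := by rw [map_mul, hQ, zero_mul]
  have hc : (fun m => eval y (pderiv m (Q * G))) ≠ 0 := fun h => hy ⟨h0, congrFun h⟩
  have htangent : eval y (tangentForm (Q * G) y) = 0 ∧ tangentForm (Q * G) y ∣ Q * G := by
    have := tangentForm_dvd_prod_linForm (L := L) (y := f ∘ y)
      (by rw [← hL, ← map_eval, h0, map_zero])
      (by rwa [← hL, isSingularZero_map_iff f.injective])
    rw [← hL, ← map_tangentForm, ← map_eval, map_eq_zero] at this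
    exact ⟨this.1, linForm_dvd_of_map_dvd_map f hc this.2⟩
  refine ⟨_, hc, ((prime_linForm hc).dvd_or_dvd htangent.2).resolve_right fun hG => hy ?_⟩
  refine isSingularZero_mul hQ ?_
  exact zero_dvd_iff.1 (htangent.1 ▸ map_dvd (eval y) hG)

end SingularZeros

section Restriction

variable {σ R A V : Type*} [CommRing R] [CommRing A] [Algebra R A]
  [AddCommGroup V] [Module A V] [Module R V]

lemma derivation_aeval [Fintype σ] (D : Derivation R A V) (g : σ → A) (P : MvPolynomial σ R) :
    D (aeval g P) = ∑ i, aeval g (pderiv i P) • D (g i) := by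
  classical
  induction P using MvPolynomial.induction_on with
  | C a => simp
  | add P Q hP hQ => simp only [map_add, hP, hQ, add_smul, Finset.sum_add_distrib]
  | mul_X P m hP =>
    simp [Derivation.leibniz, hP, pderiv_X, Pi.single_apply, add_smul, Finset.sum_add_distrib,
      Finset.smul_sum, mul_smul, apply_ite (aeval g), ite_smul]

variable [DecidableEq σ]

/-- The restriction of a polynomial to the line through `u` parallel to the `i`-th axis, with
the `i`-th coordinate as parameter. -/
def lineRestrict (u : σ → R) (i : σ) : MvPolynomial σ R →ₐ[R] Polynomial R :=
  aeval (Function.update (fun m => Polynomial.C (u m)) i Polynomial.X)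

lemma eval_lineRestrict (u : σ → R) (i : σ) (z : R) (P : MvPolynomial σ R) :
    (lineRestrict u i P).eval z = eval (Function.update u i z) P := by
  suffices (Polynomial.aeval z).comp (lineRestrict u i) = aeval (Function.update u i z) by
    simpa [Polynomial.coe_aeval_eq_eval, coe_aeval_eq_eval] using AlgHom.congr_fun this P
  refine algHom_ext fun m => ?_
  rcases eq_or_ne m i with rfl | hm
  · simp [lineRestrict]
  · simp [lineRestrict, hm]

lemma derivative_lineRestrict [Finite σ] (u : σ → R) (i : σ) (P : MvPolynomial σ R) :
    Polynomial.derivative (lineRestrict u i P) = lineRestrict u i (pderiv i P) := by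
  have := Fintype.ofFinite σ
  refine (derivation_aeval Polynomial.derivative' _ P).trans ?_
  rw [Finset.sum_eq_single i]
  · simp [lineRestrict, Polynomial.derivative']
  · intro m _ hm
    simp [hm, Polynomial.derivative']
  · simp

end Restriction

section PadicPoints

lemma toZMod_eq_zero_iff {p : ℕ} [Fact p.Prime] (z : ℤ_[p]) :
    PadicInt.toZMod z = 0 ↔ ‖z‖ < 1 := by
  rw [← RingHom.mem_ker, PadicInt.ker_toZMod, IsLocalRing.mem_maximalIdeal, PadicInt.mem_nonunits]

lemma exists_zero_lift_of_not_isSingularZero {σ : Type*} [Finite σ] {p : ℕ} [Fact p.Prime]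
    (Q : MvPolynomial σ ℤ_[p]) {x : σ → ZMod p} (h0 : eval x (Q.map PadicInt.toZMod) = 0)
    (hx : ¬ IsSingularZero (Q.map PadicInt.toZMod) x) :
    ∃ y : σ → ℤ_[p], eval y Q = 0 ∧ PadicInt.toZMod ∘ y = x := by
  classical
  obtain ⟨u, rfl⟩ : ∃ u : σ → ℤ_[p], PadicInt.toZMod ∘ u = x :=
    (ZMod.ringHom_surjective PadicInt.toZMod).comp_left x
  obtain ⟨i, hi⟩ := not_forall.1 fun h => hx ⟨h0, h⟩
  rw [pderiv_map] at hi
  have heval (P : MvPolynomial σ ℤ_[p]) : PadicInt.toZMod ((lineRestrict u i P).eval (u i)) =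
      eval (PadicInt.toZMod ∘ u) (P.map PadicInt.toZMod) := by
    rw [eval_lineRestrict, Function.update_eq_self, map_eval]
  have hder : ‖(lineRestrict u i Q).derivative.eval (u i)‖ = 1 := by
    rw [derivative_lineRestrict]
    exact (PadicInt.norm_le_one _).eq_of_not_lt fun h =>
      hi (heval (pderiv i Q) ▸ (toZMod_eq_zero_iff _).2 h)
  obtain ⟨z, hz, hzu, -⟩ := hensels_lemma (F := lineRestrict u i Q) (a := u i)
    (by simpa only [Polynomial.coe_aeval_eq_eval, hder, one_pow, ← toZMod_eq_zero_iff, heval])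
  simp only [Polynomial.coe_aeval_eq_eval, hder, ← toZMod_eq_zero_iff, map_sub, sub_eq_zero]
    at hz hzu
  refine ⟨Function.update u i z, by rw [← eval_lineRestrict, hz], ?_⟩
  rw [Function.comp_update, hzu]
  exact Function.update_eq_self i _

lemma IsDecomp.exists_factorization {n d : ℕ} {F : MvPolynomial (Fin n) ℤ}
    {L : Fin d → Fin n → ℂ} (h : IsDecomp F L) (E : Type*) [Field E] [CharZero E]
    [IsAlgClosed E] :
    ∃ L' : Fin d → Fin n → E, F.map (Int.castRingHom E) = ∏ j, linForm (L' j) := by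
  let A := algebraicClosure ℚ ℂ
  have : Algebra.IsAlgebraic ℚ A := algebraicClosure.isAlgebraic ℚ ℂ
  let φ : A →ₐ[ℚ] E := IsAlgClosed.lift
  have hmem (j i) : L j i ∈ A :=
    mem_algebraicClosure_iff.2 ((h.1 j i).tower_top (A := ℚ)).isAlgebraic
  have hA : F.map (Int.castRingHom A) = ∏ j, linForm fun i => (⟨L j i, hmem j i⟩ : A) := by
    apply map_injective (algebraMap A ℂ) (algebraMap A ℂ).injective
    rw [MvPolynomial.map_map, map_prod, RingHom.ext_int ((algebraMap A ℂ).comp (Int.castRingHom A))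
      (Int.castRingHom ℂ), h.2]
    simp only [map_linForm]
    rfl
  refine ⟨fun j i => φ ⟨L j i, hmem j i⟩, ?_⟩
  rw [← RingHom.ext_int (φ.toRingHom.comp (Int.castRingHom A)) (Int.castRingHom E),
    ← MvPolynomial.map_map, hA, map_prod]
  simp only [map_linForm]
  rfl

lemma IsPadicFact.isSingularZero_of_linForm_eq_zero {n : ℕ} {F : MvPolynomial (Fin n) ℤ} {p : ℕ}
    {hp : p.Prime} {τ : ℕ} {𝓛 : Fin τ → Fin n → @PadicInt p ⟨hp⟩}
    {Fstar : MvPolynomial (Fin n) (@PadicInt p ⟨hp⟩)} (hfact : IsPadicFact F p hp 𝓛 Fstar)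
    {x : Fin n → ZMod p} {i j : Fin τ} (hij : i ≠ j)
    (hi : eval x ((linForm (𝓛 i)).map (@PadicInt.toZMod p ⟨hp⟩)) = 0)
    (hj : eval x ((linForm (𝓛 j)).map (@PadicInt.toZMod p ⟨hp⟩)) = 0) :
    IsSingularZero (F.map (Int.castRingHom (ZMod p))) x := by
  have : Fact p.Prime := ⟨hp⟩
  obtain ⟨P, hP⟩ : ∃ P, F.map (Int.castRingHom ℤ_[p]) = linForm (𝓛 i) * linForm (𝓛 j) * P := by
    rw [hfact.1]
    refine dvd_mul_of_dvd_right ?_ _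
    rw [← Finset.prod_pair hij (f := fun l => linForm (𝓛 l))]
    exact Finset.prod_dvd_prod_of_subset _ _ _ (Finset.subset_univ _)
  rw [← RingHom.ext_int (PadicInt.toZMod.comp (Int.castRingHom ℤ_[p])) (Int.castRingHom (ZMod p)),
    ← MvPolynomial.map_map, hP, map_mul, map_mul]
  exact (isSingularZero_mul hi hj).mul_right _

/-- A nonsingular zero of `F` modulo `p` that is a zero of `F*` would lift to a `p`-adic zero of
`F*`, and the tangent hyperplane there would be a linear factor of `F*`. -/
lemma IsPadicFact.isSingularZero_of_eval_eq_zero {n d : ℕ} {F : MvPolynomial (Fin n) ℤ}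
    {L : Fin d → Fin n → ℂ} (hF : IsDecomp F L) {p : ℕ} {hp : p.Prime} {τ : ℕ}
    {𝓛 : Fin τ → Fin n → @PadicInt p ⟨hp⟩} {Fstar : MvPolynomial (Fin n) (@PadicInt p ⟨hp⟩)}
    (hfact : IsPadicFact F p hp 𝓛 Fstar) {x : Fin n → ZMod p}
    (hx : eval x (Fstar.map (@PadicInt.toZMod p ⟨hp⟩)) = 0) :
    IsSingularZero (F.map (Int.castRingHom (ZMod p))) x := by
  have : Fact p.Prime := ⟨hp⟩
  obtain ⟨hFG, hno⟩ := hfact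
  have hFp : F.map (Int.castRingHom (ZMod p)) =
      (Fstar * ∏ i, linForm (𝓛 i)).map PadicInt.toZMod := by
    rw [← hFG, MvPolynomial.map_map, RingHom.ext_int (PadicInt.toZMod.comp _)]
  rw [hFp]
  by_contra hsing
  obtain ⟨y, hy, rfl⟩ := exists_zero_lift_of_not_isSingularZero Fstar hx fun h =>
    hsing (by rw [map_mul]; exact h.mul_right _)
  obtain ⟨L', hL'⟩ := hF.exists_factorization (AlgebraicClosure ℚ_[p])
  let ι : ℤ_[p] →+* ℚ_[p] := PadicInt.Coe.ringHom
  have hsplit : (Fstar.map ι * (∏ i, linForm (𝓛 i)).map ι).map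
      (algebraMap ℚ_[p] (AlgebraicClosure ℚ_[p])) = ∏ j, linForm (L' j) := by
    rw [← map_mul, ← hFG, MvPolynomial.map_map, MvPolynomial.map_map, ← hL']
    congr 1
  obtain ⟨c, hc, hdvd⟩ := exists_linForm_dvd_of_not_isSingularZero _ hsplit (y := ι ∘ y)
    (by rw [← map_eval, hy, map_zero]) fun h => by
      rw [← map_mul, isSingularZero_map_iff Subtype.coe_injective] at h
      exact hsing (h.map _)
  exact hno c (Function.ne_iff.1 hc) hdvd

lemma Sp.isSingularZero {n d : ℕ} {F : MvPolynomial (Fin n) ℤ} {L : Fin d → Fin n → ℂ}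
    (hF : IsDecomp F L) {p : ℕ} {hp : p.Prime} {τ : ℕ}
    {𝓛 : Fin τ → Fin n → @PadicInt p ⟨hp⟩} {Fstar : MvPolynomial (Fin n) (@PadicInt p ⟨hp⟩)}
    (hfact : IsPadicFact F p hp 𝓛 Fstar) {x : Fin n → ZMod p} (hx : Sp p hp 𝓛 Fstar x) :
    IsSingularZero (F.map (Int.castRingHom (ZMod p))) x := by
  rcases hx with ⟨i, j, hij, hi, hj⟩ | hx
  · exact hfact.isSingularZero_of_linForm_eq_zero hij.ne
      (by rwa [map_linForm, eval_linForm]) (by rwa [map_linForm, eval_linForm])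
  · exact hfact.isSingularZero_of_eval_eq_zero hF hx

end PadicPoints

section PrimeSums

lemma sum_primes_log_div_sq_dyadic_le {M : ℝ} (hM : 0 < M) :
    ∑ p ∈ Finset.Ioc ⌊M⌋₊ ⌊2 * M⌋₊ with p.Prime, Real.log p / (p : ℝ) ^ 2
      ≤ 2 * Real.log 4 / M := by
  calc ∑ p ∈ Finset.Ioc ⌊M⌋₊ ⌊2 * M⌋₊ with p.Prime, Real.log p / (p : ℝ) ^ 2
      ≤ ∑ p ∈ Finset.Ioc ⌊M⌋₊ ⌊2 * M⌋₊ with p.Prime, Real.log p / M ^ 2 := by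
        refine Finset.sum_le_sum fun p hp => ?_
        simp only [Finset.mem_filter, Finset.mem_Ioc] at hp
        have : M < p := (Nat.floor_lt hM.le).1 hp.1.1
        gcongr
    _ ≤ ∑ p ∈ Finset.Ioc 0 ⌊2 * M⌋₊ with p.Prime, Real.log p / M ^ 2 := by
        refine Finset.sum_le_sum_of_subset_of_nonneg ?_ fun p _ _ => by positivity
        exact Finset.filter_subset_filter _ (Finset.Ioc_subset_Ioc_left (Nat.zero_le _))
    _ = Chebyshev.theta (2 * M) / M ^ 2 := by rw [← Finset.sum_div, Chebyshev.theta]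
    _ ≤ Real.log 4 * (2 * M) / M ^ 2 := by
        gcongr
        exact Chebyshev.theta_le_log4_mul_x (by positivity)
    _ = 2 * Real.log 4 / M := by field_simp

lemma sum_primes_log_div_sq_le (K : ℕ) {M : ℝ} (hM : 0 < M) :
    ∑ p ∈ Finset.Ioc ⌊M⌋₊ ⌊2 ^ K * M⌋₊ with p.Prime, Real.log p / (p : ℝ) ^ 2
      ≤ 4 * Real.log 4 / M := by
  induction K generalizing M with
  | zero =>
    simp only [pow_zero, one_mul, Finset.Ioc_self, Finset.filter_empty, Finset.sum_empty]
    positivity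
  | succ K ih =>
    have hsplit : Finset.Ioc ⌊M⌋₊ ⌊2 ^ (K + 1) * M⌋₊ =
        Finset.Ioc ⌊M⌋₊ ⌊2 * M⌋₊ ∪ Finset.Ioc ⌊2 * M⌋₊ ⌊2 ^ K * (2 * M)⌋₊ := by
      rw [Finset.Ioc_union_Ioc_eq_Ioc (Nat.floor_le_floor (by linarith))
        (Nat.floor_le_floor (le_mul_of_one_le_left (by positivity) (one_le_pow₀ one_le_two))),
        pow_succ, mul_assoc]
    rw [hsplit, Finset.filter_union]
    calc _ ≤ 2 * Real.log 4 / M + 4 * Real.log 4 / (2 * M) :=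
          (le_of_add_le_of_nonneg_left Finset.sum_union_inter.le
            (Finset.sum_nonneg fun p _ => by positivity)).trans
            (add_le_add (sum_primes_log_div_sq_dyadic_le hM) (ih (by positivity)))
      _ = 4 * Real.log 4 / M := by field_simp; ring

lemma sum_primes_inv_sq_le {M : ℝ} (hM : 1 < M) (N : ℕ) :
    ∑ p ∈ Finset.Ioc ⌊M⌋₊ N with p.Prime, 1 / (p : ℝ) ^ 2
      ≤ 4 * Real.log 4 / (M * Real.log M) := by
  have hM0 : 0 < M := by linarith
  have hlogM : 0 < Real.log M := Real.log_pos hM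
  have hN : N ≤ ⌊2 ^ N * M⌋₊ := by
    refine Nat.le_floor ?_
    have h : (N : ℝ) ≤ 2 ^ N := by exact_mod_cast Nat.lt_two_pow_self.le
    exact h.trans (le_mul_of_one_le_right (by positivity) hM.le)
  calc ∑ p ∈ Finset.Ioc ⌊M⌋₊ N with p.Prime, 1 / (p : ℝ) ^ 2
      ≤ ∑ p ∈ Finset.Ioc ⌊M⌋₊ N with p.Prime, Real.log p / (p : ℝ) ^ 2 / Real.log M := by
        refine Finset.sum_le_sum fun p hp => ?_
        simp only [Finset.mem_filter, Finset.mem_Ioc] at hp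
        have : M < p := (Nat.floor_lt hM0.le).1 hp.1.1
        rw [div_right_comm]
        gcongr
        rw [one_le_div hlogM]
        exact Real.log_le_log hM0 this.le
    _ ≤ ∑ p ∈ Finset.Ioc ⌊M⌋₊ ⌊2 ^ N * M⌋₊ with p.Prime,
          Real.log p / (p : ℝ) ^ 2 / Real.log M := by
        refine Finset.sum_le_sum_of_subset_of_nonneg ?_ fun p _ _ => by positivity
        exact Finset.filter_subset_filter _ (Finset.Ioc_subset_Ioc_right hN)
    _ ≤ 4 * Real.log 4 / M / Real.log M := by
        rw [← Finset.sum_div]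
        gcongr
        exact sum_primes_log_div_sq_le N hM0
    _ = 4 * Real.log 4 / (M * Real.log M) := by rw [div_div]

end PrimeSums

section Cube

variable {m : ℕ}

/-- The integer points of the cube `[-N, N]ᵐ`. -/
def cube (m N : ℕ) : Finset (Fin m → ℤ) := Fintype.piFinset fun _ => Finset.Icc (-(N : ℤ)) N

lemma mem_cube {N : ℕ} {y : Fin m → ℤ} : y ∈ cube m N ↔ ∀ i, |y i| ≤ N := by
  simp [cube, abs_le]

lemma card_Icc_neg_self (N : ℕ) : (Finset.Icc (-(N : ℤ)) N).card = 2 * N + 1 := by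
  rw [Int.card_Icc]
  omega

lemma card_cube (m N : ℕ) : (cube m N).card = (2 * N + 1) ^ m := by
  simp only [cube, Fintype.card_piFinset, card_Icc_neg_self, Finset.prod_const, Finset.card_univ,
    Fintype.card_fin]

lemma card_Icc_filter_intCast_eq_le {p : ℕ} (hp : 0 < p) (N : ℕ) (r : ZMod p) :
    ((Finset.Icc (-(N : ℤ)) N).filter fun t : ℤ => (t : ZMod p) = r).card ≤ 2 * (N / p + 1) := by
  have hp' : (0 : ℤ) < p := by exact_mod_cast hp
  have hmaps : ∀ t ∈ (Finset.Icc (-(N : ℤ)) N).filter fun t : ℤ => (t : ZMod p) = r,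
      t / p ∈ Finset.Icc (-(N / p : ℤ) - 1) (N / p) := by
    intro t ht
    simp only [Finset.mem_filter, Finset.mem_Icc] at ht ⊢
    refine ⟨(Int.le_ediv_iff_mul_le hp').2 ?_, Int.ediv_le_ediv hp' ht.1.2⟩
    linarith [Int.lt_ediv_add_one_mul_self (N : ℤ) hp', ht.1.1]
  have hinj : Set.InjOn (· / (p : ℤ))
      ((Finset.Icc (-(N : ℤ)) N).filter fun t : ℤ => (t : ZMod p) = r) := by
    intro t ht s hs h
    have hmod : t % p = s % p := (ZMod.intCast_eq_intCast_iff' t s p).1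
      ((Finset.mem_filter.1 ht).2.trans (Finset.mem_filter.1 hs).2.symm)
    rw [← Int.emod_add_mul_ediv t p, ← Int.emod_add_mul_ediv s p, hmod, show t / p = s / p from h]
  refine (Finset.card_le_card_of_injOn _ hmaps hinj).trans_eq ?_
  rw [Int.card_Icc, ← Int.natCast_ediv]
  omega

lemma card_Icc_filter_intCast_mem_le {p : ℕ} (hp : 0 < p) (N : ℕ) (Z : Finset (ZMod p)) :
    ((Finset.Icc (-(N : ℤ)) N).filter fun t : ℤ => (t : ZMod p) ∈ Z).card
      ≤ 2 * (N / p + 1) * Z.card := by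
  classical
  refine Finset.card_le_mul_card_image_of_maps_to (fun t ht => (Finset.mem_filter.1 ht).2) _ ?_
  intro r _
  refine (Finset.card_le_card ?_).trans (card_Icc_filter_intCast_eq_le hp N r)
  exact Finset.filter_subset_filter _ (Finset.filter_subset _ _)

lemma card_cube_filter_intCast_mem_le {p : ℕ} (hp : 0 < p) (N : ℕ)
    (Z : Finset (Fin m → ZMod p)) :
    ((cube m N).filter fun y => (fun i => (y i : ZMod p)) ∈ Z).card
      ≤ (2 * (N / p + 1)) ^ m * Z.card := by
  classical
  refine Finset.card_le_mul_card_image_of_maps_to (fun y hy => (Finset.mem_filter.1 hy).2) _ ?_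
  intro r _
  calc _ ≤ (Fintype.piFinset fun i =>
          (Finset.Icc (-(N : ℤ)) N).filter fun t : ℤ => (t : ZMod p) = r i).card := by
        refine Finset.card_le_card fun y hy => ?_
        simp only [Finset.mem_filter, cube, Fintype.mem_piFinset] at hy ⊢
        exact fun i => ⟨hy.1.1 i, congrFun hy.2 i⟩
    _ ≤ ∏ _i : Fin m, 2 * (N / p + 1) := by
        rw [Fintype.card_piFinset]
        exact Finset.prod_le_prod' fun i _ => card_Icc_filter_intCast_eq_le hp N (r i)
    _ = (2 * (N / p + 1)) ^ m := by simp

lemma card_piFinset_filter_eval_eq_zero_le {A : Type*} [CommRing A] [IsDomain A] [DecidableEq A]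
    (hm : 0 < m) {P : MvPolynomial (Fin m) A} (hP : P ≠ 0) (S : Finset A) :
    ((Fintype.piFinset fun _ : Fin m => S).filter fun x => eval x P = 0).card
      ≤ (∑ i, P.degreeOf i) * S.card ^ (m - 1) := by
  obtain ⟨m, rfl⟩ := Nat.exists_eq_succ_of_ne_zero hm.ne'
  rcases S.eq_empty_or_nonempty with rfl | hS
  · simp
  have hS0 : (0 : ℚ≥0) < S.card := by exact_mod_cast hS.card_pos
  have h := schwartz_zippel_sum_degreeOf hP fun _ => S
  rw [Finset.prod_const, Finset.card_univ, Fintype.card_fin, div_le_iff₀ (by positivity),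
    ← Finset.sum_div, div_mul_eq_mul_div, pow_succ, ← mul_assoc,
    mul_div_cancel_right₀ _ hS0.ne'] at h
  exact_mod_cast h

lemma degreeOf_map_le {A A' σ : Type*} [CommSemiring A] [CommSemiring A'] (f : A →+* A')
    (P : MvPolynomial σ A) (i : σ) : (P.map f).degreeOf i ≤ P.degreeOf i := by
  classical
  rw [degreeOf_def, degreeOf_def]
  exact Multiset.count_le_of_le i degrees_map_le

lemma natCast_dvd_eval_iff {σ : Type*} {p : ℕ} {P : MvPolynomial σ ℤ} {x : σ → ℤ} :
    (p : ℤ) ∣ eval x P ↔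
      eval (fun i => (x i : ZMod p)) (P.map (Int.castRingHom (ZMod p))) = 0 := by
  rw [← ZMod.intCast_zmod_eq_zero_iff_dvd]
  exact (map_eval (Int.castRingHom (ZMod p)) x P).congr_left

lemma card_cube_filter_dvd_eval_le (hm : 0 < m) {p : ℕ} (hp : p.Prime)
    {R : MvPolynomial (Fin m) ℤ} (hR : R.map (Int.castRingHom (ZMod p)) ≠ 0) (N : ℕ) :
    ((cube m N).filter fun y => (p : ℤ) ∣ eval y R).card ≤
      (2 * (N / p + 1)) ^ m * ((∑ i, R.degreeOf i) * p ^ (m - 1)) := by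
  classical
  have : Fact p.Prime := ⟨hp⟩
  let Z := (Fintype.piFinset fun _ : Fin m => (Finset.univ : Finset (ZMod p))).filter fun x =>
    eval x (R.map (Int.castRingHom (ZMod p))) = 0
  have hZ : Z.card ≤ (∑ i, R.degreeOf i) * p ^ (m - 1) := by
    refine (card_piFinset_filter_eval_eq_zero_le hm hR Finset.univ).trans ?_
    rw [Finset.card_univ, ZMod.card]
    gcongr with i
    exact degreeOf_map_le _ _ _
  calc ((cube m N).filter fun y => (p : ℤ) ∣ eval y R).card
      = ((cube m N).filter fun y => (fun i => (y i : ZMod p)) ∈ Z).card := by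
        simp [Z, natCast_dvd_eval_iff]
    _ ≤ (2 * (N / p + 1)) ^ m * Z.card := card_cube_filter_intCast_mem_le hp.pos N Z
    _ ≤ _ := by gcongr

lemma card_Icc_filter_dvd_eval_le {p : ℕ} (hp : p.Prime) {g : Polynomial ℤ}
    (hg : g.map (Int.castRingHom (ZMod p)) ≠ 0) (N : ℕ) :
    ((Finset.Icc (-(N : ℤ)) N).filter fun t => (p : ℤ) ∣ g.eval t).card ≤
      2 * (N / p + 1) * g.natDegree := by
  classical
  have : Fact p.Prime := ⟨hp⟩
  let Z := (g.map (Int.castRingHom (ZMod p))).roots.toFinset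
  have hZ : Z.card ≤ g.natDegree :=
    (Multiset.toFinset_card_le _).trans
      ((Polynomial.card_roots' _).trans Polynomial.natDegree_map_le)
  calc ((Finset.Icc (-(N : ℤ)) N).filter fun t => (p : ℤ) ∣ g.eval t).card
      = ((Finset.Icc (-(N : ℤ)) N).filter fun t : ℤ => (t : ZMod p) ∈ Z).card := by
        simp [Z, Polynomial.mem_roots hg, Polynomial.IsRoot, Polynomial.eval_intCast_map,
          ZMod.intCast_zmod_eq_zero_iff_dvd]
    _ ≤ 2 * (N / p + 1) * Z.card := card_Icc_filter_intCast_mem_le hp.pos N Z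
    _ ≤ _ := by gcongr

lemma exists_abs_eval_le_pow (R : MvPolynomial (Fin m) ℤ) :
    ∃ e : ℕ, ∀ N : ℕ, 2 ≤ N → ∀ y ∈ cube m N, |eval y R| ≤ (N : ℤ) ^ e := by
  induction R using MvPolynomial.induction_on with
  | C a =>
    refine ⟨a.natAbs, fun N hN y _ => ?_⟩
    rw [eval_C, Int.abs_eq_natAbs]
    exact_mod_cast Nat.lt_two_pow_self.le.trans (Nat.pow_le_pow_left hN _)
  | add P Q hP hQ =>
    obtain ⟨e, he⟩ := hP
    obtain ⟨e', he'⟩ := hQ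
    refine ⟨e + e' + 1, fun N hN y hy => ?_⟩
    have hN' : (2 : ℤ) ≤ N := by exact_mod_cast hN
    have hN1 : (1 : ℤ) ≤ N := by linarith
    calc |eval y (P + Q)| ≤ |eval y P| + |eval y Q| := by rw [map_add]; exact abs_add_le _ _
      _ ≤ (N : ℤ) ^ e + (N : ℤ) ^ e' := add_le_add (he N hN y hy) (he' N hN y hy)
      _ ≤ (N : ℤ) ^ (e + e') + (N : ℤ) ^ (e + e') := by gcongr <;> omega
      _ = (N : ℤ) ^ (e + e') * 2 := by ring
      _ ≤ (N : ℤ) ^ (e + e' + 1) := by rw [pow_succ]; gcongr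
  | mul_X P i hP =>
    obtain ⟨e, he⟩ := hP
    refine ⟨e + 1, fun N hN y hy => ?_⟩
    rw [map_mul, eval_X, abs_mul, pow_succ]
    exact mul_le_mul (he N hN y hy) (mem_cube.1 hy i) (abs_nonneg _) (by positivity)

lemma card_primeFactors_filter_lt_le {N e : ℕ} (hN : 2 ≤ N) {a : ℤ} (ha : a ≠ 0)
    (hae : |a| ≤ (N : ℤ) ^ e) : (a.natAbs.primeFactors.filter (N < ·)).card ≤ e := by
  have ha0 : a.natAbs ≠ 0 := Int.natAbs_ne_zero.2 ha
  have hle : a.natAbs ≤ N ^ e := by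
    rw [Int.abs_eq_natAbs] at hae
    exact_mod_cast hae
  refine (Nat.pow_le_pow_iff_right (by omega : 1 < N)).1 (le_trans ?_ hle)
  calc N ^ (a.natAbs.primeFactors.filter (N < ·)).card
      ≤ ∏ p ∈ a.natAbs.primeFactors.filter (N < ·), p :=
        Finset.pow_card_le_prod _ _ _ fun p hp => (Finset.mem_filter.1 hp).2.le
    _ ≤ ∏ p ∈ a.natAbs.primeFactors, p :=
        Finset.prod_le_prod_of_subset_of_one_le' (Finset.filter_subset _ _)
          fun p hp _ => (Nat.prime_of_mem_primeFactors hp).one_le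
    _ ≤ a.natAbs := Nat.le_of_dvd (Nat.pos_of_ne_zero ha0) (Nat.prod_primeFactors_dvd _)

end Cube

section GeometricSieve

lemma card_le_mul_card_of_fibers {α β : Type*} {T : Finset (α × β)} {W : Finset α} {k : ℕ}
    (V : α → Finset β) (hT : ∀ z ∈ T, z.1 ∈ W ∧ z.2 ∈ V z.1) (hV : ∀ y ∈ W, (V y).card ≤ k) :
    T.card ≤ k * W.card := by
  classical
  refine Finset.card_le_mul_card_image_of_maps_to (f := Prod.fst) (fun z hz => (hT z hz).1) k ?_
  intro y hy
  refine le_trans (Finset.card_le_card_of_injOn Prod.snd (fun z hz => ?_) ?_) (hV y hy)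
  · obtain ⟨hzT, rfl⟩ := Finset.mem_filter.1 hz
    exact (hT z hzT).2
  · intro z hz z' hz' h
    exact Prod.ext ((Finset.mem_filter.1 hz).2.trans (Finset.mem_filter.1 hz').2.symm) h

lemma exists_forall_prime_map_ne_zero {σ : Type*} {R : MvPolynomial σ ℤ} (hR : R ≠ 0) :
    ∃ b : ℕ, ∀ p : ℕ, b < p → R.map (Int.castRingHom (ZMod p)) ≠ 0 := by
  obtain ⟨s, hs⟩ := ne_zero_iff.1 hR
  refine ⟨(coeff s R).natAbs, fun p hp h => hs ?_⟩
  have hcoeff := congrArg (coeff s) h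
  rw [coeff_map, coeff_zero, eq_intCast, ZMod.intCast_zmod_eq_zero_iff_dvd] at hcoeff
  exact Int.eq_zero_of_abs_lt_dvd hcoeff (by rw [Int.abs_eq_natAbs]; exact_mod_cast hp)

variable {m : ℕ} {f : Polynomial (MvPolynomial (Fin m) ℤ)} {a : ℤ} {R : MvPolynomial (Fin m) ℤ}

/-- The integer points `(y, t)` of the cube `[-N, N]ᵐ⁺¹` that are common zeros of `R(y)` and
`f(y, t)` modulo `p`. -/
def commonZeros (R : MvPolynomial (Fin m) ℤ) (f : Polynomial (MvPolynomial (Fin m) ℤ))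
    (N p : ℕ) : Finset ((Fin m → ℤ) × ℤ) :=
  (cube m N ×ˢ Finset.Icc (-(N : ℤ)) N).filter fun z =>
    (p : ℤ) ∣ eval z.1 R ∧ (p : ℤ) ∣ (f.map (eval z.1)).eval z.2

open Classical in
/-- The integer points `(y, t)` of the cube `[-N, N]ᵐ⁺¹` that are common zeros of `R(y)` and
`f(y, t)` modulo some prime exceeding `M`; the geometric sieve bounds their number. -/
def sieveSet (R : MvPolynomial (Fin m) ℤ) (f : Polynomial (MvPolynomial (Fin m) ℤ)) (M : ℝ)
    (N : ℕ) : Finset ((Fin m → ℤ) × ℤ) :=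
  (cube m N ×ˢ Finset.Icc (-(N : ℤ)) N).filter fun z =>
    ∃ p : ℕ, p.Prime ∧ M < p ∧ z ∈ commonZeros R f N p

lemma card_Icc_filter_dvd_eval_map_le (hlead : f.leadingCoeff = C a) {p : ℕ} (hp : p.Prime)
    (hpa : ¬ (p : ℤ) ∣ a) (N : ℕ) (y : Fin m → ℤ) :
    ((Finset.Icc (-(N : ℤ)) N).filter fun t => (p : ℤ) ∣ (f.map (eval y)).eval t).card ≤
      2 * (N / p + 1) * f.natDegree := by
  refine (card_Icc_filter_dvd_eval_le hp (fun h => hpa ?_) N).trans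
    (Nat.mul_le_mul_left _ Polynomial.natDegree_map_le)
  have hcoeff := congrArg (Polynomial.coeff · f.natDegree) h
  simpa [hlead, ZMod.intCast_zmod_eq_zero_iff_dvd] using hcoeff

lemma card_commonZeros_le (hm : 0 < m) (hlead : f.leadingCoeff = C a) {p : ℕ} (hp : p.Prime)
    (hpa : ¬ (p : ℤ) ∣ a) (hpR : R.map (Int.castRingHom (ZMod p)) ≠ 0) (N : ℕ) :
    (commonZeros R f N p).card ≤ 2 * (N / p + 1) * f.natDegree *
      ((2 * (N / p + 1)) ^ m * ((∑ i, R.degreeOf i) * p ^ (m - 1))) := by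
  refine (card_le_mul_card_of_fibers
    (fun y => (Finset.Icc (-(N : ℤ)) N).filter fun t => (p : ℤ) ∣ (f.map (eval y)).eval t)
    (W := (cube m N).filter fun y => (p : ℤ) ∣ eval y R) (fun z hz => ?_)
    fun y _ => card_Icc_filter_dvd_eval_map_le hlead hp hpa N y).trans
    (Nat.mul_le_mul_left _ (card_cube_filter_dvd_eval_le hm hp hpR N))
  simp only [commonZeros, Finset.mem_filter, Finset.mem_product] at hz ⊢
  exact ⟨⟨hz.1.1, hz.2.1⟩, hz.1.2, hz.2.2⟩

lemma card_commonZeros_le_of_le (hm : 0 < m) (hlead : f.leadingCoeff = C a) {p N : ℕ}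
    (hp : p.Prime) (hpN : p ≤ N) (hpa : ¬ (p : ℤ) ∣ a)
    (hpR : R.map (Int.castRingHom (ZMod p)) ≠ 0) :
    ((commonZeros R f N p).card : ℝ) ≤
      f.natDegree * (∑ i, R.degreeOf i : ℕ) * 4 ^ (m + 1) * N ^ (m + 1) * (1 / (p : ℝ) ^ 2) := by
  have hp0 : (0 : ℝ) < p := by exact_mod_cast hp.pos
  have hK : ((2 * (N / p + 1) : ℕ) : ℝ) ≤ 4 * N / p := by
    have hfloor : ((N / p : ℕ) : ℝ) ≤ N / p := Nat.cast_div_le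
    have hone : (1 : ℝ) ≤ N / p := (one_le_div hp0).2 (by exact_mod_cast hpN)
    push_cast
    linarith [mul_div_assoc (4 : ℝ) N p]
  obtain ⟨k, rfl⟩ := Nat.exists_eq_succ_of_ne_zero hm.ne'
  calc ((commonZeros R f N p).card : ℝ)
      ≤ (2 * (N / p + 1) : ℕ) * f.natDegree *
          ((2 * (N / p + 1) : ℕ) ^ (k + 1) * ((∑ i, R.degreeOf i : ℕ) * (p : ℝ) ^ k)) := by
        exact_mod_cast card_commonZeros_le hm hlead hp hpa hpR N
    _ ≤ (4 * N / p) * f.natDegree *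
          ((4 * N / p) ^ (k + 1) * ((∑ i, R.degreeOf i : ℕ) * (p : ℝ) ^ k)) := by gcongr
    _ = _ := by
        simp only [Nat.succ_eq_add_one, div_pow, mul_pow]
        field_simp
        ring

lemma sum_card_commonZeros_le (hm : 0 < m) (hlead : f.leadingCoeff = C a) {M : ℝ} (hM : 1 < M)
    (hpa : ∀ p : ℕ, M < p → ¬ (p : ℤ) ∣ a)
    (hpR : ∀ p : ℕ, M < p → R.map (Int.castRingHom (ZMod p)) ≠ 0) (N : ℕ) :
    ∑ p ∈ Finset.Ioc ⌊M⌋₊ N with p.Prime, ((commonZeros R f N p).card : ℝ) ≤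
      f.natDegree * (∑ i, R.degreeOf i : ℕ) * 4 ^ (m + 1) * (4 * Real.log 4) *
        ((N : ℝ) ^ (m + 1) / (M * Real.log M)) := by
  calc ∑ p ∈ Finset.Ioc ⌊M⌋₊ N with p.Prime, ((commonZeros R f N p).card : ℝ)
      ≤ ∑ p ∈ Finset.Ioc ⌊M⌋₊ N with p.Prime, f.natDegree * (∑ i, R.degreeOf i : ℕ) *
          4 ^ (m + 1) * N ^ (m + 1) * (1 / (p : ℝ) ^ 2) := by
        refine Finset.sum_le_sum fun p hp => ?_
        simp only [Finset.mem_filter, Finset.mem_Ioc] at hp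
        have hMp : M < p := (Nat.floor_lt (by linarith)).1 hp.1.1
        exact card_commonZeros_le_of_le hm hlead hp.2 hp.1.2 (hpa p hMp) (hpR p hMp)
    _ ≤ f.natDegree * (∑ i, R.degreeOf i : ℕ) * 4 ^ (m + 1) * N ^ (m + 1) *
          (4 * Real.log 4 / (M * Real.log M)) := by
        rw [← Finset.mul_sum]
        gcongr
        exact sum_primes_inv_sq_le hM N
    _ = _ := by ring

lemma card_product_filter_eval_eq_zero_le (hm : 0 < m) (hR : R ≠ 0) (N : ℕ) :
    ((cube m N ×ˢ Finset.Icc (-(N : ℤ)) N).filter fun z => eval z.1 R = 0).card ≤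
      (∑ i, R.degreeOf i) * (2 * N + 1) ^ m := by
  have hzeros : ((cube m N).filter fun y => eval y R = 0).card ≤
      (∑ i, R.degreeOf i) * (2 * N + 1) ^ (m - 1) :=
    card_Icc_neg_self N ▸ card_piFinset_filter_eval_eq_zero_le hm hR _
  calc _ = ((cube m N).filter (fun y => eval y R = 0) ×ˢ Finset.Icc (-(N : ℤ)) N).card :=
        congrArg Finset.card (Finset.filter_product_left fun y => eval y R = 0)
    _ = ((cube m N).filter fun y => eval y R = 0).card * (2 * N + 1) := by
        rw [Finset.card_product, card_Icc_neg_self]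
    _ ≤ (∑ i, R.degreeOf i) * (2 * N + 1) ^ (m - 1) * (2 * N + 1) :=
        Nat.mul_le_mul_right _ hzeros
    _ = _ := by rw [mul_assoc, pow_sub_one_mul hm.ne']

lemma card_commonZeros_large_le (hlead : f.leadingCoeff = C a) {e N : ℕ} (hN : 2 ≤ N)
    (he : ∀ y ∈ cube m N, |eval y R| ≤ (N : ℤ) ^ e) {T : Finset ((Fin m → ℤ) × ℤ)}
    (hT : ∀ z ∈ T, eval z.1 R ≠ 0 ∧
      ∃ p : ℕ, p.Prime ∧ N < p ∧ ¬ (p : ℤ) ∣ a ∧ z ∈ commonZeros R f N p) :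
    T.card ≤ e * (2 * f.natDegree) * (2 * N + 1) ^ m := by
  let P : (Fin m → ℤ) → Finset ℕ := fun y =>
    ((eval y R).natAbs.primeFactors.filter (N < ·)).filter fun p : ℕ => ¬ (p : ℤ) ∣ a
  let V : (Fin m → ℤ) → Finset ℤ := fun y => (P y).biUnion fun p =>
    (Finset.Icc (-(N : ℤ)) N).filter fun t => (p : ℤ) ∣ (f.map (eval y)).eval t
  calc T.card ≤ e * (2 * f.natDegree) * ((cube m N).filter fun y => eval y R ≠ 0).card := by
        refine card_le_mul_card_of_fibers V (fun z hz => ?_) fun y hy => ?_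
        · obtain ⟨h0, p, hp, hNp, hpa, hz⟩ := hT z hz
          simp only [commonZeros, Finset.mem_filter, Finset.mem_product] at hz
          refine ⟨Finset.mem_filter.2 ⟨hz.1.1, h0⟩, Finset.mem_biUnion.2 ⟨p, ?_,
            Finset.mem_filter.2 ⟨hz.1.2, hz.2.2⟩⟩⟩
          simp only [P, Finset.mem_filter, Nat.mem_primeFactors]
          exact ⟨⟨⟨hp, Int.natCast_dvd.1 hz.2.1, Int.natAbs_ne_zero.2 h0⟩, hNp⟩, hpa⟩
        · obtain ⟨hy, h0⟩ := Finset.mem_filter.1 hy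
          refine (Finset.card_biUnion_le_card_mul _ _ (2 * f.natDegree) fun p hp => ?_).trans
            (Nat.mul_le_mul_right _ ((Finset.card_filter_le _ _).trans
              (card_primeFactors_filter_lt_le hN h0 (he y hy))))
          simp only [P, Finset.mem_filter] at hp
          simpa [Nat.div_eq_of_lt hp.1.2] using card_Icc_filter_dvd_eval_map_le hlead
            (Nat.prime_of_mem_primeFactors hp.1.1) hp.2 N y
    _ ≤ e * (2 * f.natDegree) * (2 * N + 1) ^ m :=
        Nat.mul_le_mul_left _ ((Finset.card_filter_le _ _).trans (card_cube m N).le)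

lemma card_sieveSet_le (hm : 0 < m) (hlead : f.leadingCoeff = C a) (hR : R ≠ 0) {e N : ℕ}
    (hN : 2 ≤ N) (he : ∀ y ∈ cube m N, |eval y R| ≤ (N : ℤ) ^ e) {M : ℝ} (hM : 0 ≤ M)
    (hpa : ∀ p : ℕ, M < p → ¬ (p : ℤ) ∣ a) :
    (sieveSet R f M N).card ≤
      ∑ p ∈ Finset.Ioc ⌊M⌋₊ N with p.Prime, (commonZeros R f N p).card +
        ((∑ i, R.degreeOf i) + e * (2 * f.natDegree)) * (2 * N + 1) ^ m := by
  classical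
  let small := ((Finset.Ioc ⌊M⌋₊ N).filter Nat.Prime).biUnion (commonZeros R f N)
  let zero := (cube m N ×ˢ Finset.Icc (-(N : ℤ)) N).filter fun z => eval z.1 R = 0
  let large := (sieveSet R f M N).filter fun z => eval z.1 R ≠ 0 ∧
    ∃ p : ℕ, p.Prime ∧ N < p ∧ ¬ (p : ℤ) ∣ a ∧ z ∈ commonZeros R f N p
  have hcover : sieveSet R f M N ⊆ small ∪ (zero ∪ large) := by
    intro z hz
    obtain ⟨hzbox, p, hp, hMp, hzp⟩ := Finset.mem_filter.1 hz
    simp only [Finset.mem_union, small, zero, large, Finset.mem_biUnion, Finset.mem_filter,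
      Finset.mem_Ioc]
    rcases le_or_gt p N with hpN | hNp
    · exact Or.inl ⟨p, ⟨⟨(Nat.floor_lt hM).2 hMp, hpN⟩, hp⟩, hzp⟩
    · by_cases h0 : eval z.1 R = 0
      · exact Or.inr (Or.inl ⟨hzbox, h0⟩)
      · exact Or.inr (Or.inr ⟨hz, h0, p, hp, hNp, hpa p hMp, hzp⟩)
  calc (sieveSet R f M N).card
      ≤ small.card + (zero.card + large.card) :=
        (Finset.card_le_card hcover).trans ((Finset.card_union_le _ _).trans
          (Nat.add_le_add_left (Finset.card_union_le _ _) _))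
    _ ≤ _ := by
        rw [add_mul]
        gcongr
        · exact Finset.card_biUnion_le
        · exact card_product_filter_eval_eq_zero_le hm hR N
        · exact card_commonZeros_large_le hlead hN he fun z hz => (Finset.mem_filter.1 hz).2

/-- The geometric sieve of Ekedahl and Bhargava. Primes `p ≤ N` contribute `O(Nᵐ⁺¹ / p²)` each,
while a value `R(y) ≠ 0` has only boundedly many prime factors `p > N`. -/
theorem geometric_sieve (hm : 0 < m) (ha : a ≠ 0) (hlead : f.leadingCoeff = C a) (hR : R ≠ 0) :
    ∃ A M₀ : ℝ, 0 < A ∧ 1 < M₀ ∧ ∀ M : ℝ, M₀ ≤ M → ∀ N : ℕ, 2 ≤ N →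
      ((sieveSet R f M N).card : ℝ) ≤
        A * ((N : ℝ) ^ (m + 1) / (M * Real.log M) + (N : ℝ) ^ m) := by
  obtain ⟨b, hb⟩ := exists_forall_prime_map_ne_zero hR
  obtain ⟨e, he⟩ := exists_abs_eval_le_pow R
  set A₁ : ℝ := f.natDegree * (∑ i, R.degreeOf i : ℕ) * 4 ^ (m + 1) * (4 * Real.log 4)
  set A₂ : ℝ := ((∑ i, R.degreeOf i : ℕ) + e * (2 * f.natDegree)) * 3 ^ m
  have hA₁ : 0 ≤ A₁ := by positivity
  have hA₂ : 0 ≤ A₂ := by positivity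
  refine ⟨A₁ + A₂ + 1, b + a.natAbs + 2, by positivity, ?_, fun M hM N hN => ?_⟩
  · linarith [b.cast_nonneg (α := ℝ), a.natAbs.cast_nonneg (α := ℝ)]
  have hM1 : 1 < M := by linarith [b.cast_nonneg (α := ℝ), a.natAbs.cast_nonneg (α := ℝ)]
  have hpR (p : ℕ) (hp : M < p) : R.map (Int.castRingHom (ZMod p)) ≠ 0 := by
    refine hb p ?_
    exact_mod_cast (by linarith [a.natAbs.cast_nonneg (α := ℝ)] : (b : ℝ) < p)
  have hpa (p : ℕ) (hp : M < p) : ¬ (p : ℤ) ∣ a := by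
    refine fun h => ha (Int.eq_zero_of_abs_lt_dvd h ?_)
    rw [Int.abs_eq_natAbs]
    exact_mod_cast (by linarith [b.cast_nonneg (α := ℝ)] : (a.natAbs : ℝ) < p)
  have hX : 0 ≤ (N : ℝ) ^ (m + 1) / (M * Real.log M) := by
    have := Real.log_pos hM1
    positivity
  have hpow : ((2 * N + 1 : ℕ) : ℝ) ^ m ≤ 3 ^ m * (N : ℝ) ^ m := by
    rw [← mul_pow]
    gcongr
    exact_mod_cast (by omega : 2 * N + 1 ≤ 3 * N)
  calc ((sieveSet R f M N).card : ℝ)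
      ≤ ∑ p ∈ Finset.Ioc ⌊M⌋₊ N with p.Prime, ((commonZeros R f N p).card : ℝ) +
          ((∑ i, R.degreeOf i : ℕ) + e * (2 * f.natDegree)) * ((2 * N + 1 : ℕ) : ℝ) ^ m := by
        exact_mod_cast card_sieveSet_le hm hlead hR hN (he N hN) (by linarith) hpa
    _ ≤ A₁ * ((N : ℝ) ^ (m + 1) / (M * Real.log M)) + A₂ * (N : ℝ) ^ m := by
        rw [mul_assoc _ (3 ^ m)]
        gcongr
        exact sum_card_commonZeros_le hm hlead hM1 hpa hpR N
    _ ≤ (A₁ + A₂ + 1) * ((N : ℝ) ^ (m + 1) / (M * Real.log M) + (N : ℝ) ^ m) := by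
        rw [mul_add]
        gcongr <;> linarith

end GeometricSieve

section Shear

variable {R S : Type*} [CommRing R] [CommRing S] {m : ℕ}

/-- The isomorphism `R[x₀, …, xₘ] ≃ R[y₁, …, yₘ][t]` with `x₀ = t` and `xᵢ = yᵢ + cᵢ t`, which
makes the direction `(1, c)` the distinguished one. -/
def shear (c : Fin m → R) :
    MvPolynomial (Fin (m + 1)) R ≃ₐ[R] Polynomial (MvPolynomial (Fin m) R) :=
  AlgEquiv.ofAlgHom
    (aeval (Fin.cons Polynomial.X fun i =>
      Polynomial.C (X i) + Polynomial.C (C (c i)) * Polynomial.X))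
    (Polynomial.aevalTower (aeval fun i => X i.succ - C (c i) * X 0) (X 0))
    (by ext i <;> simp [← algebraMap_eq])
    (by
      ext i
      refine Fin.cases ?_ (fun i => ?_) i <;> simp [← algebraMap_eq])

/-- The change of coordinates `x ↦ (y, t)` on points that corresponds to `shear c`. -/
def shearPoint (c : Fin m → R) : (Fin (m + 1) → R) ≃ (Fin m → R) × R where
  toFun x := (fun i => x i.succ - c i * x 0, x 0)
  invFun z := Fin.cons z.2 fun i => z.1 i + c i * z.2
  left_inv x := by
    ext i
    refine Fin.cases ?_ (fun i => ?_) i <;> simp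
  right_inv z := by simp

variable (c : Fin m → R)

@[simp] lemma shear_C (r : R) : shear c (C r) = Polynomial.C (C r) :=
  (shear c).commutes r

@[simp] lemma shear_X_zero : shear c (X 0) = Polynomial.X := by simp [shear]

@[simp] lemma shear_X_succ (i : Fin m) :
    shear c (X i.succ) = Polynomial.C (X i) + Polynomial.C (C (c i)) * Polynomial.X := by
  simp [shear]

lemma map_shear (φ : R →+* S) (F : MvPolynomial (Fin (m + 1)) R) :
    (shear c F).map (map φ) = shear (φ ∘ c) (F.map φ) := by
  induction F using MvPolynomial.induction_on with
  | C r => simp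
  | add p q hp hq => simp [hp, hq]
  | mul_X p i hp =>
    rw [map_mul, Polynomial.map_mul, hp, map_mul, map_mul, map_X]
    congr 1
    refine Fin.cases ?_ (fun i => ?_) i <;> simp

lemma eval_shear (F : MvPolynomial (Fin (m + 1)) R) (x : Fin (m + 1) → R) :
    ((shear c F).map (eval (shearPoint c x).1)).eval (shearPoint c x).2 = eval x F := by
  induction F using MvPolynomial.induction_on with
  | C r => simp
  | add p q hp hq => simp [hp, hq]
  | mul_X p i hp =>
    rw [map_mul, Polynomial.map_mul, Polynomial.eval_mul, hp, map_mul, eval_X]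
    congr 1
    refine Fin.cases ?_ (fun i => ?_) i <;> simp [shearPoint]

lemma derivative_shear (F : MvPolynomial (Fin (m + 1)) R) :
    (shear c F).derivative = ∑ i, shear c (pderiv i F) * (shear c (X i)).derivative := by
  have hX (i) : shear c (X i) = (Fin.cons Polynomial.X fun i =>
      Polynomial.C (X i) + Polynomial.C (C (c i)) * Polynomial.X :
        Fin (m + 1) → Polynomial (MvPolynomial (Fin m) R)) i := aeval_X _ i
  let D : Derivation R (Polynomial (MvPolynomial (Fin m) R))
      (Polynomial (MvPolynomial (Fin m) R)) := Polynomial.derivative'.restrictScalars R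
  simp only [hX]
  exact derivation_aeval D _ F

lemma dvd_eval_derivative_shear {F : MvPolynomial (Fin (m + 1)) R} {x : Fin (m + 1) → R} {p : R}
    (h : ∀ i, p ∣ eval x (pderiv i F)) :
    p ∣ ((shear c F).derivative.map (eval (shearPoint c x).1)).eval (shearPoint c x).2 := by
  simp only [derivative_shear c F, Polynomial.map_sum, Polynomial.map_mul,
    Polynomial.eval_finsetSum, Polynomial.eval_mul, eval_shear]
  exact Finset.dvd_sum fun i _ => (h i).mul_right _

lemma shear_linForm (l : Fin (m + 1) → R) :
    shear c (linForm l) = Polynomial.C (C (l 0 + ∑ i, l i.succ * c i)) * Polynomial.X +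
      Polynomial.C (∑ i, C (l i.succ) * X i) := by
  simp only [linForm, Fin.sum_univ_succ, map_add, map_mul, map_sum, shear_C, shear_X_zero,
    shear_X_succ, mul_add, Finset.sum_add_distrib, add_mul, Finset.sum_mul, mul_assoc]
  ring

lemma natDegree_shear_linForm {l : Fin (m + 1) → R} (hl : l 0 + ∑ i, l i.succ * c i ≠ 0) :
    (shear c (linForm l)).natDegree = 1 := by
  rw [shear_linForm, Polynomial.natDegree_linear (C_ne_zero.2 hl)]

lemma leadingCoeff_shear_linForm {l : Fin (m + 1) → R} (hl : l 0 + ∑ i, l i.succ * c i ≠ 0) :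
    (shear c (linForm l)).leadingCoeff = C (l 0 + ∑ i, l i.succ * c i) := by
  rw [shear_linForm, Polynomial.leadingCoeff_linear (C_ne_zero.2 hl)]

lemma exists_direction [IsDomain R] [CharZero R] {ι : Type*} [Finite ι]
    {L : ι → Fin (m + 1) → R} (hL : ∀ j, L j ≠ 0) :
    ∃ c : Fin m → ℤ, ∀ j, L j 0 + ∑ i, L j i.succ * (c i : R) ≠ 0 := by
  have := Fintype.ofFinite ι
  let P (j : ι) : Polynomial R := ∑ i, Polynomial.C (L j i) * Polynomial.X ^ (i : ℕ)
  have hP (j : ι) : P j ≠ 0 := by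
    refine fun h => hL j (funext fun i => ?_)
    have hcoeff := congrArg (Polynomial.coeff · (i : ℕ)) h
    simpa [P, Polynomial.finsetSum_coeff, Polynomial.coeff_X_pow, Fin.val_inj] using hcoeff
  obtain ⟨s, hs⟩ : ∃ s : ℕ, (∏ j, P j).eval (s : R) ≠ 0 := by
    by_contra! h
    exact Finset.prod_ne_zero_iff.2 (fun j _ => hP j) (Polynomial.eq_zero_of_infinite_isRoot _
      (Set.infinite_of_injective_forall_mem Nat.cast_injective h))
  rw [Polynomial.eval_prod] at hs
  refine ⟨fun i => (s : ℤ) ^ ((i : ℕ) + 1), fun j hj => Finset.prod_ne_zero_iff.1 hs j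
    (Finset.mem_univ j) ?_⟩
  simpa [P, Polynomial.eval_finsetSum, Fin.sum_univ_succ] using hj

end Shear

section LeadingCoefficient

lemma eq_C_of_map_eq_C {R S σ : Type*} [CommRing R] [CommRing S] {φ : R →+* S}
    (hφ : Function.Injective φ) {q : MvPolynomial σ R} {z : S} (h : q.map φ = C z) :
    q = C (coeff 0 q) := by
  rw [← totalDegree_eq_zero_iff_eq_C, totalDegree, ← support_map_of_injective q hφ, h]
  exact totalDegree_C z

variable {n m d : ℕ}

lemma IsDecomp.ne_zero {F : MvPolynomial (Fin n) ℤ} {L : Fin d → Fin n → ℂ}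
    (hF : IsDecomp F L) (hF0 : F ≠ 0) (j : Fin d) : L j ≠ 0 := by
  intro h
  refine hF0 (map_injective (Int.castRingHom ℂ) Int.cast_injective ?_)
  rw [hF.2, map_zero]
  exact Finset.prod_eq_zero (Finset.mem_univ j) (by simp [h, linForm])

variable {F : MvPolynomial (Fin (m + 1)) ℤ} {L : Fin d → Fin (m + 1) → ℂ} {c : Fin m → ℤ}

lemma IsDecomp.map_shear_eq_prod (hF : IsDecomp F L) (c : Fin m → ℤ) :
    (shear c F).map (map (Int.castRingHom ℂ)) =
      ∏ j, shear (fun i => (c i : ℂ)) (linForm (L j)) := by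
  rw [map_shear, hF.2, map_prod]
  rfl

lemma IsDecomp.natDegree_shear (hF : IsDecomp F L)
    (hc : ∀ j, L j 0 + ∑ i, L j i.succ * (c i : ℂ) ≠ 0) : (shear c F).natDegree = d := by
  rw [← Polynomial.natDegree_map_eq_of_injective (map_injective (σ := Fin m) (Int.castRingHom ℂ)
    Int.cast_injective), hF.map_shear_eq_prod, Polynomial.natDegree_prod]
  · simp [natDegree_shear_linForm _ (hc _)]
  · intro j _ h
    simpa [h] using natDegree_shear_linForm _ (hc j)

lemma IsDecomp.exists_leadingCoeff_shear (hF : IsDecomp F L)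
    (hc : ∀ j, L j 0 + ∑ i, L j i.succ * (c i : ℂ) ≠ 0) (hF0 : F ≠ 0) :
    ∃ a : ℤ, a ≠ 0 ∧ (shear c F).leadingCoeff = C a := by
  have hlead : map (Int.castRingHom ℂ) (shear c F).leadingCoeff =
      C (∏ j, (L j 0 + ∑ i, L j i.succ * (c i : ℂ))) := by
    rw [← Polynomial.leadingCoeff_map_of_injective (map_injective _ Int.cast_injective),
      hF.map_shear_eq_prod, Polynomial.leadingCoeff_prod, map_prod]
    exact Finset.prod_congr rfl fun j _ => leadingCoeff_shear_linForm _ (hc j)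
  have hC := eq_C_of_map_eq_C Int.cast_injective hlead
  refine ⟨_, fun h0 => hF0 ?_, hC⟩
  simpa [h0] using hC

end LeadingCoefficient

section Resultant

lemma squarefree_map_mulEquiv {M N : Type*} [Monoid M] [Monoid N] (e : M ≃* N) {x : M}
    (hx : Squarefree x) : Squarefree (e x) := by
  intro y hy
  have hunit := hx (e.symm y) (by simpa using map_dvd e.symm hy)
  simpa using hunit.map e

variable {A : Type*} [CommRing A]

lemma squarefree_map_fractionRing [IsDomain A] [IsIntegrallyClosed A] {f : Polynomial A}
    (hmonic : f.Monic) (hsq : Squarefree f) (K : Type*) [Field K] [Algebra A K]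
    [IsFractionRing A K] : Squarefree (f.map (algebraMap A K)) := by
  intro x hx
  have hinj : Function.Injective (algebraMap A K) := IsFractionRing.injective A K
  have hx0 : x ≠ 0 := by
    rintro rfl
    exact (hmonic.map (algebraMap A K)).ne_zero (zero_dvd_iff.1 (by simpa using hx))
  obtain ⟨g, hg⟩ := IsIntegrallyClosed.eq_map_mul_C_of_dvd K hmonic (dvd_of_mul_left_dvd hx)
  have hunit : IsUnit (Polynomial.C x.leadingCoeff) :=
    Polynomial.isUnit_C.2 (Polynomial.leadingCoeff_ne_zero.2 hx0).isUnit
  have hgmonic : g.Monic := by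
    refine hinj ?_
    have hlead := congrArg Polynomial.leadingCoeff hg
    rw [Polynomial.leadingCoeff_mul, Polynomial.leadingCoeff_C,
      Polynomial.leadingCoeff_map_of_injective hinj] at hlead
    rw [map_one]
    exact mul_right_cancel₀ (Polynomial.leadingCoeff_ne_zero.2 hx0) (by rw [hlead, one_mul])
  have hdvd : g * g ∣ f := by
    rw [← hmonic.dvd_iff_fraction_map_dvd_fraction_map (K := K) (hgmonic.mul hgmonic),
      Polynomial.map_mul]
    rw [← hg] at hx
    exact (mul_dvd_mul (Dvd.intro _ rfl) (Dvd.intro _ rfl)).trans hx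
  rw [← hg]
  exact ((hsq g hdvd).map (Polynomial.mapRingHom (algebraMap A K))).mul hunit

lemma resultant_derivative_ne_zero [IsDomain A] [IsIntegrallyClosed A] [CharZero A]
    {f : Polynomial A} (hlead : IsUnit f.leadingCoeff) (hsq : Squarefree f) :
    f.resultant f.derivative ≠ 0 := by
  let K := FractionRing A
  have hinj : Function.Injective (algebraMap A K) := IsFractionRing.injective A K
  have : CharZero K := charZero_of_injective_algebraMap hinj
  obtain ⟨u, hu⟩ := hlead.exists_left_inv
  have hassoc : Associated f (Polynomial.C u * f) :=
    associated_unit_mul_right _ _ (Polynomial.isUnit_C.2 (.of_mul_eq_one _ hu))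
  have hmonic : (Polynomial.C u * f).Monic :=
    Polynomial.monic_C_mul_of_mul_leadingCoeff_eq_one hu
  have hsqK : Squarefree (f.map (algebraMap A K)) :=
    (hassoc.map (Polynomial.mapRingHom (algebraMap A K))).squarefree_iff.2
      (squarefree_map_fractionRing hmonic (hassoc.squarefree_iff.1 hsq) K)
  have hres := Polynomial.resultant_ne_zero _ _ (PerfectField.separable_iff_squarefree.2 hsqK)
  rw [Polynomial.derivative_map, Polynomial.resultant_map_map,
    Polynomial.natDegree_map_eq_of_injective hinj,
    Polynomial.natDegree_map_eq_of_injective hinj] at hres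
  exact fun h => hres (by rw [h, map_zero])

lemma resultant_derivative_shear_ne_zero {m : ℕ} {F : MvPolynomial (Fin (m + 1)) ℤ}
    (hsq : Squarefree (F.map (Int.castRingHom ℚ))) {c : Fin m → ℤ} {a : ℤ} (ha : a ≠ 0)
    (hlead : (shear c F).leadingCoeff = C a) :
    (shear c F).resultant (shear c F).derivative ≠ 0 := by
  have hinj : Function.Injective (map (σ := Fin m) (Int.castRingHom ℚ)) :=
    map_injective _ Int.cast_injective
  have hres := resultant_derivative_ne_zero (f := (shear c F).map (map (Int.castRingHom ℚ)))
    (by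
      rw [Polynomial.leadingCoeff_map_of_injective hinj, hlead, map_C]
      exact (isUnit_iff_ne_zero.2 (by simpa using ha)).map C)
    (by
      rw [map_shear]
      exact squarefree_map_mulEquiv (shear _).toMulEquiv hsq)
  rw [Polynomial.derivative_map, Polynomial.resultant_map_map,
    Polynomial.natDegree_map_eq_of_injective hinj,
    Polynomial.natDegree_map_eq_of_injective hinj] at hres
  exact fun h => hres (by rw [h, map_zero])

lemma dvd_eval_resultant_derivative {B : Type*} [CommRing B] (φ : A →+* B) {f : Polynomial A}
    (hdeg : f.natDegree ≠ 0) {p t : B} (h₁ : p ∣ (f.map φ).eval t)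
    (h₂ : p ∣ (f.derivative.map φ).eval t) : p ∣ φ (f.resultant f.derivative) := by
  obtain ⟨u, v, -, -, huv⟩ := Polynomial.exists_mul_add_mul_eq_C_resultant f f.derivative
    le_rfl le_rfl (Or.inl hdeg)
  have h := congrArg (fun q => (q.map φ).eval t) huv
  simp only [Polynomial.map_add, Polynomial.map_mul, Polynomial.eval_add, Polynomial.eval_mul,
    Polynomial.map_C, Polynomial.eval_C] at h
  rw [← h]
  exact dvd_add (h₁.mul_right _) (h₂.mul_right _)

end Resultant

section Counting

variable {m d : ℕ} {F : MvPolynomial (Fin (m + 1)) ℤ} {L : Fin d → Fin (m + 1) → ℂ}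

lemma Sp.dvd {n : ℕ} {F : MvPolynomial (Fin n) ℤ} {L : Fin d → Fin n → ℂ} (hF : IsDecomp F L)
    {p : ℕ} {hp : p.Prime} {τ : ℕ} {𝓛 : Fin τ → Fin n → @PadicInt p ⟨hp⟩}
    {Fstar : MvPolynomial (Fin n) (@PadicInt p ⟨hp⟩)} (hfact : IsPadicFact F p hp 𝓛 Fstar)
    {x : Fin n → ℤ} (hx : Sp p hp 𝓛 Fstar fun i => (x i : ZMod p)) :
    (p : ℤ) ∣ eval x F ∧ ∀ i, (p : ℤ) ∣ eval x (pderiv i F) := by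
  obtain ⟨h0, hderiv⟩ := hx.isSingularZero hF hfact
  exact ⟨natCast_dvd_eval_iff.2 h0, fun i =>
    natCast_dvd_eval_iff.2 (pderiv_map (φ := Int.castRingHom (ZMod p)) ▸ hderiv i)⟩

lemma shearPoint_mem_cube (c : Fin m → ℤ) {b : ℕ} {x : Fin (m + 1) → ℤ} (hx : ∀ i, |x i| ≤ b) :
    shearPoint c x ∈ cube m ((2 + ∑ i, (c i).natAbs) * b) ×ˢ
      Finset.Icc (-(((2 + ∑ i, (c i).natAbs) * b : ℕ) : ℤ)) ((2 + ∑ i, (c i).natAbs) * b : ℕ) := by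
  have hc (i : Fin m) : |c i| + 1 ≤ ((2 + ∑ i, (c i).natAbs : ℕ) : ℤ) := by
    have := Finset.single_le_sum (f := fun i => (c i).natAbs) (fun _ _ => Nat.zero_le _)
      (Finset.mem_univ i)
    rw [Int.abs_eq_natAbs]
    omega
  refine Finset.mem_product.2 ⟨mem_cube.2 fun i => ?_, Finset.mem_Icc.2 (abs_le.1 ?_)⟩
  · calc |x i.succ - c i * x 0| ≤ |x i.succ| + |c i| * |x 0| := abs_mul (c i) _ ▸ abs_sub _ _
      _ ≤ b + |c i| * b := by gcongr <;> exact hx _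
      _ = (|c i| + 1) * b := by ring
      _ ≤ ((2 + ∑ i, (c i).natAbs) * b : ℕ) := by
        rw [Nat.cast_mul]
        exact mul_le_mul_of_nonneg_right (hc i) b.cast_nonneg
  · exact (hx 0).trans (by exact_mod_cast Nat.le_mul_of_pos_left b (by omega))

lemma N3starCount_le_card_sieveSet (hF : IsDecomp F L) {τ : ∀ p : ℕ, p.Prime → ℕ}
    {𝓛 : ∀ (p : ℕ) (hp : p.Prime), Fin (τ p hp) → Fin (m + 1) → @PadicInt p ⟨hp⟩}
    {Fstar : ∀ (p : ℕ) (hp : p.Prime), MvPolynomial (Fin (m + 1)) (@PadicInt p ⟨hp⟩)}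
    (hfact : ∀ (p : ℕ) (hp : p.Prime), IsPadicFact F p hp (𝓛 p hp) (Fstar p hp))
    {c : Fin m → ℤ} (hdeg : (shear c F).natDegree ≠ 0) (M B : ℝ) :
    N3starCount 𝓛 Fstar M B ≤ (sieveSet ((shear c F).resultant (shear c F).derivative)
      (shear c F) M ((2 + ∑ i, (c i).natAbs) * ⌊B⌋₊)).card := by
  rw [← Set.ncard_coe_finset]
  refine Set.ncard_le_ncard_of_injOn (shearPoint c) ?_ (shearPoint c).injective.injOn
    (Finset.finite_toSet _)
  rintro x ⟨hxB, p, hp, hMp, hSp⟩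
  have hxb (i) : |x i| ≤ (⌊B⌋₊ : ℤ) := by
    rw [Int.abs_eq_natAbs]
    exact_mod_cast Nat.le_floor (by rw [Nat.cast_natAbs, Int.cast_abs]; exact hxB i)
  have hmem := shearPoint_mem_cube c hxb
  obtain ⟨hpF, hpdF⟩ := hSp.dvd hF (hfact p hp)
  have hpf : (p : ℤ) ∣ ((shear c F).map (eval (shearPoint c x).1)).eval (shearPoint c x).2 := by
    rwa [eval_shear]
  have hpres : (p : ℤ) ∣ eval (shearPoint c x).1
      ((shear c F).resultant (shear c F).derivative) :=
    dvd_eval_resultant_derivative _ hdeg hpf (dvd_eval_derivative_shear c hpdF)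
  simp only [Finset.mem_coe, sieveSet, Finset.mem_filter]
  exact ⟨hmem, p, hp, hMp, Finset.mem_filter.2 ⟨hmem, hpres, hpf⟩⟩

lemma scale_sieve_bound {A D B : ℝ} (hA : 0 ≤ A) (hD : 0 ≤ D) {K : ℕ} (hK : 1 ≤ K)
    (hB : 0 ≤ B) (m : ℕ) :
    A * (((K * ⌊B⌋₊ : ℕ) : ℝ) ^ (m + 1) / D + ((K * ⌊B⌋₊ : ℕ) : ℝ) ^ m) ≤
      A * (K : ℝ) ^ (m + 1) * (B ^ (m + 1) / D + B ^ m) := by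
  have hK1 : (1 : ℝ) ≤ K := by exact_mod_cast hK
  have hpow (k : ℕ) : ((K * ⌊B⌋₊ : ℕ) : ℝ) ^ k ≤ (K : ℝ) ^ k * B ^ k := by
    rw [← mul_pow, Nat.cast_mul]
    gcongr
    exact Nat.floor_le hB
  calc A * (((K * ⌊B⌋₊ : ℕ) : ℝ) ^ (m + 1) / D + ((K * ⌊B⌋₊ : ℕ) : ℝ) ^ m)
      ≤ A * ((K : ℝ) ^ (m + 1) * B ^ (m + 1) / D + (K : ℝ) ^ m * B ^ m) := by
        gcongr <;> exact hpow _
    _ ≤ A * ((K : ℝ) ^ (m + 1) * B ^ (m + 1) / D + (K : ℝ) ^ (m + 1) * B ^ m) := by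
        gcongr
        omega
    _ = A * (K : ℝ) ^ (m + 1) * (B ^ (m + 1) / D + B ^ m) := by ring

end Counting

theorem stmt9_general {n d : ℕ} (hn : 2 ≤ n) (hd : 0 < d) {F : MvPolynomial (Fin n) ℤ}
    {L : Fin d → Fin n → ℂ} (hF : IsDecomp F L) (hsq : Squarefree (F.map (Int.castRingHom ℚ)))
    {τ : ∀ p : ℕ, p.Prime → ℕ}
    {𝓛 : ∀ (p : ℕ) (hp : p.Prime), Fin (τ p hp) → Fin n → @PadicInt p ⟨hp⟩}
    {Fstar : ∀ (p : ℕ) (hp : p.Prime), MvPolynomial (Fin n) (@PadicInt p ⟨hp⟩)}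
    (hfact : ∀ (p : ℕ) (hp : p.Prime), IsPadicFact F p hp (𝓛 p hp) (Fstar p hp)) :
    ∃ C M₀ : ℝ, 0 < C ∧ ∀ M ≥ M₀, ∀ B ≥ 1, (N3starCount 𝓛 Fstar M B : ℝ) ≤
      C * (B ^ n / (M * Real.log M) + B ^ (n - 1)) := by
  obtain ⟨m, rfl⟩ : ∃ m, n = m + 1 := ⟨n - 1, by omega⟩
  have hF0 : F ≠ 0 := fun h => hsq.ne_zero (by rw [h, map_zero])
  obtain ⟨c, hc⟩ := exists_direction (hF.ne_zero hF0)
  obtain ⟨a, ha, hlead⟩ := hF.exists_leadingCoeff_shear hc hF0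
  have hdeg : (shear c F).natDegree ≠ 0 := hF.natDegree_shear hc ▸ hd.ne'
  obtain ⟨A, M₀, hA, hM₀, hsieve⟩ :=
    geometric_sieve (by omega) ha hlead (resultant_derivative_shear_ne_zero hsq ha hlead)
  let K : ℕ := 2 + ∑ i, (c i).natAbs
  have hK : 2 ≤ K := Nat.le_add_right _ _
  refine ⟨A * (K : ℝ) ^ (m + 1), M₀, by positivity, fun M hM B hB => ?_⟩
  have hlog : 0 < Real.log M := Real.log_pos (hM₀.trans_le hM)
  have hfloor : 2 ≤ K * ⌊B⌋₊ := hK.trans (Nat.le_mul_of_pos_right K (Nat.floor_pos.2 hB))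
  calc (N3starCount 𝓛 Fstar M B : ℝ)
      ≤ _ := Nat.cast_le.2 (N3starCount_le_card_sieveSet hF hfact hdeg M B)
    _ ≤ _ := hsieve M hM _ hfloor
    _ ≤ _ := scale_sieve_bound hA.le (mul_nonneg (by linarith) hlog.le) (by omega) (by linarith) m

theorem stmt9 (n d : ℕ) (hn : 2 ≤ n) (hd : n < d)
    (F : MvPolynomial (Fin n) ℤ) (L : Fin d → Fin n → ℂ)
    (hF : IsDecomp F L) (hirr : Irreducible (F.map (Int.castRingHom ℚ)))
    (hΔ : discProd L ≠ 0)
    (ξ₁ : ℝ → ℝ) (hξ : Xi1Good ξ₁)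
    (τ : ∀ p : ℕ, p.Prime → ℕ)
    (𝓛 : ∀ (p : ℕ) (hp : p.Prime), Fin (τ p hp) → Fin n → @PadicInt p ⟨hp⟩)
    (Fstar : ∀ (p : ℕ) (hp : p.Prime), MvPolynomial (Fin n) (@PadicInt p ⟨hp⟩))
    (hfact : ∀ (p : ℕ) (hp : p.Prime), IsPadicFact F p hp (𝓛 p hp) (Fstar p hp)) :
    ∃ C : ℝ, 0 < C ∧ ∀ᶠ B : ℝ in atTop,
      (N3starCount 𝓛 Fstar (ξ₁ B) B : ℝ)
        ≤ C * (B ^ n / (ξ₁ B * Real.log (ξ₁ B)) + B ^ (n - 1)) := by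
  obtain ⟨C, M₀, hC, hbound⟩ := stmt9_general hn (by omega) hF hirr.squarefree hfact
  refine ⟨C, hC, ?_⟩
  filter_upwards [hξ.2.1.eventually_ge_atTop M₀, eventually_ge_atTop 1] with B hξB hB
  exact hbound _ hξB _ hB

end
end
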